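/- Let k be a nonnegative integer and let f = f₀ + M₂* f₁ with f₀ ∈ M_{4k+2}(Γ₀⁺(2),(−1)^k) and f₁ ∈ M_{4k}(Γ₀⁺(2),(−1)^k), where M₂*(z) = (2E₂(2z)+E₂(z))/3. Suppose f is extremal, i.e. v_∞(f) = k (which equals dim 𝑀̃_{4k+2}^{≤1}(Γ₀⁺(2),(−1)^k) − 1). Let M₂(z) = 2E₂(2z) − E₂(z), M₄(z) = (4E₄(2z)+E₄(z))/5 (= M₂²), M₈(z) = q ∏_{n≥1}(1−qⁿ)⁸(1−q^{2n})⁸, and P(z) = e^{πikz} ∏_{n≥1} (1−qⁿ)^{4k}(1−q^{2n})^{4k} (= M₈^{k/2}). Then y := f/(P·M₂) satisfies y″(z) = −4π² ( (k/2)² M₄(z) − 32 M₈(z)/M₄(z) ) y(z) at every z ∈ ℍ with M₂(z) ≠ 0. -/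

import Mathlib

noncomputable section

open Complex Matrix Filter Topology

abbrev SL2R := Matrix.SpecialLinearGroup (Fin 2) ℝ
abbrev SL2Z := Matrix.SpecialLinearGroup (Fin 2) ℤ

/-- The upper half-plane, as a subset of `ℂ`. -/
def UHP : Set ℂ := {z : ℂ | 0 < z.im}

/-- The embedding of `SL(2,ℤ)` into `SL(2,ℝ)`. -/
def toR : SL2Z →* SL2R := Matrix.SpecialLinearGroup.map (Int.castRingHom ℝ)

/-- `SL(2,ℤ)` as a subgroup of `SL(2,ℝ)`. -/
def SL2ZR : Subgroup SL2R := Subgroup.map toR ⊤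

/-- Möbius action of a real matrix on a complex number. -/
def moeb (γ : SL2R) (z : ℂ) : ℂ :=
  ((γ.1 0 0 : ℂ) * z + (γ.1 0 1 : ℂ)) / ((γ.1 1 0 : ℂ) * z + (γ.1 1 1 : ℂ))

/-- The automorphy factor `cz + d`. -/
def jfac (γ : SL2R) (z : ℂ) : ℂ := (γ.1 1 0 : ℂ) * z + (γ.1 1 1 : ℂ)

/-- A holomorphic modular form of weight `k` and character `χ` on `Γ ≤ SL(2,ℝ)`
(for `Γ` commensurable with `SL(2,ℤ)`): holomorphic on `ℍ`, satisfying the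
transformation law, and holomorphic (bounded) at every cusp. -/
structure IsModularForm (Γ : Subgroup SL2R) (χ : SL2R → ℂ) (k : ℤ) (f : ℂ → ℂ) : Prop where
  holo : DifferentiableOn ℂ f UHP
  transform : ∀ γ ∈ Γ, ∀ z ∈ UHP, f (moeb γ z) = χ γ * jfac γ z ^ k * f z
  bdd_at_cusps : ∀ σ : SL2Z, ∃ C : ℝ, ∀ z ∈ UHP, 1 ≤ z.im →
    ‖jfac (toR σ) z ^ (-k) * f (moeb (toR σ) z)‖ ≤ C

/-- A finite-order character of `Γ`. -/
def IsCharacter (Γ : Subgroup SL2R) (χ : SL2R → ℂ) : Prop :=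
  (∀ γ ∈ Γ, ∀ δ ∈ Γ, χ (γ * δ) = χ γ * χ δ) ∧
    ∃ n : ℕ, 0 < n ∧ ∀ γ ∈ Γ, χ γ ^ n = 1

/-- `φ` is quasimodular of weight 2 and depth 1 on `Γ`, with constant `α`:
`(cz+d)⁻² φ(γz) = φ(z) + α c/(cz+d)`. -/
def IsQuasiWt2 (Γ : Subgroup SL2R) (α : ℂ) (φ : ℂ → ℂ) : Prop :=
  ∀ γ ∈ Γ, ∀ z ∈ UHP,
    (jfac γ z)⁻¹ ^ 2 * φ (moeb γ z) = φ z + α * (γ.1 1 0 : ℂ) / jfac γ z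

/-- `f` has vanishing order `ν` at the cusp `∞`, with respect to `q_N = e^{2πiz/N}`:
`q_N^{-ν}·f(z)` tends to a nonzero constant as `Im z → ∞`. -/
def VOrder (N : ℝ) (f : ℂ → ℂ) (ν : ℝ) : Prop :=
  ∃ c : ℂ, c ≠ 0 ∧ ∀ ε : ℝ, 0 < ε → ∃ Y : ℝ, ∀ z : ℂ, Y ≤ z.im →
    ‖Complex.exp (-(2 * Real.pi * Complex.I * (ν : ℂ) * z / (N : ℂ))) * f z - c‖ < ε

/-- `Γ₀(N)` as a subgroup of `SL(2,ℝ)`. -/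
def Gamma0R (N : ℕ) : Subgroup SL2R := Subgroup.map toR (CongruenceSubgroup.Gamma0 N)

/-- `q = e^{2πiz}`. -/
def qexp (z : ℂ) : ℂ := Complex.exp (2 * Real.pi * Complex.I * z)

/-- `E₂(z) = 1 - 24 ∑_{n≥1} σ₁(n) qⁿ`. -/
def E2 (z : ℂ) : ℂ :=
  1 - 24 * ∑' n : ℕ, (ArithmeticFunction.sigma 1 (n + 1) : ℂ) * qexp z ^ (n + 1)

/-- `E₄(z) = 1 + 240 ∑_{n≥1} σ₃(n) qⁿ`. -/
def E4 (z : ℂ) : ℂ :=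
  1 + 240 * ∑' n : ℕ, (ArithmeticFunction.sigma 3 (n + 1) : ℂ) * qexp z ^ (n + 1)

/-- `M_k(Γ₀⁺(2),ε)`. -/
def MFplus2 (ε : ℂ) (k : ℤ) : Set (ℂ → ℂ) :=
  {f | IsModularForm (Gamma0R 2) (fun _ => 1) k f ∧
    ∀ z ∈ UHP, ((Real.sqrt 2 : ℂ) * z) ^ (-k) * f (-1 / (2 * z)) = ε * f z}

/-- `M₂*(z) = (2E₂(2z) + E₂(z))/3`. -/
def M2star2 (z : ℂ) : ℂ := (2 * E2 (2 * z) + E2 z) / 3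

/-- `M₂(z) = 2E₂(2z) - E₂(z)`. -/
def M2minus (z : ℂ) : ℂ := 2 * E2 (2 * z) - E2 z

/-- `M₄(z) = (4E₄(2z) + E₄(z))/5 = M₂(z)²`. -/
def M4plus2 (z : ℂ) : ℂ := (4 * E4 (2 * z) + E4 z) / 5

/-- `M₈(z) = q ∏_{n≥1}(1-qⁿ)⁸(1-q^{2n})⁸ = η(z)⁸η(2z)⁸`. -/
def M8fun (z : ℂ) : ℂ :=
  qexp z * ∏' n : ℕ, ((1 - qexp z ^ (n + 1)) ^ 8 * (1 - qexp z ^ (2 * (n + 1))) ^ 8)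

/-- `P(z) = e^{πikz} ∏_{n≥1} (1-qⁿ)^{4k}(1-q^{2n})^{4k} = M₈(z)^{k/2}`. -/
def Pfun2 (k : ℕ) (z : ℂ) : ℂ :=
  Complex.exp (Real.pi * Complex.I * k * z) *
    ∏' n : ℕ, ((1 - qexp z ^ (n + 1)) ^ (4 * k) * (1 - qexp z ^ (2 * (n + 1))) ^ (4 * k))

/-!
Write `η₄ = (η(τ) η(2τ))⁴`, `N₄ = M₂ M₂* - 4 D M₂` and `h = N₄ / η₄`. A Fricke form of weight `4k`
is `η₄ᵏ p(h)` with `deg p ≤ k`, and one of weight `4k + 2` is `η₄ᵏ (M₂³ / η₄) b(h)` with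
`deg b < k`, so that `f = η₄ᵏ G` with `G = M₂* p(h) + (M₂³ / η₄) b(h)`. Clearing denominators, the
equation for `y = G / M₂` becomes `L G = 0` for a second-order operator `L`. By the Ramanujan-type
identities for `D M₂`, `D M₂*` and `D N₄`, `L` maps `G` to `M₂⁴` times a function of the same shape
with again `deg p ≤ k`, and since `k / 2` is an exponent of `L` at `∞`, extremality of `f`
makes `L G / M₂⁴` vanish to order greater than `k / 2`.

A function `G` of this shape vanishing to order greater than `k / 2` is zero. Put `P = p(h)`. Then
`G² / 8 + G · D P - P · D G` is `M₂²` times a polynomial in `h`; it tends to `0` at `∞` where `h`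
has a pole, so it vanishes identically. Hence `P / G + (π i / 4) τ` would be constant if `G ≠ 0`,
which is impossible because `P` and `G` are invariant under `τ ↦ τ + 2`.
-/

open UpperHalfPlane hiding I
open scoped ModularForm MatrixGroups Manifold
open Derivative (normalizedDerivOfComplex normalizedDerivOfComplex_mdifferentiable
  normalizedDerivOfComplex_slash)
open scoped Derivative

namespace FrickeTwo

/-- `HasQDeriv F F'` says that `F : ℍ → ℂ` is holomorphic with normalised derivative
`D F = (2πi)⁻¹ dF/dτ = F'`. -/
def HasQDeriv (F F' : ℍ → ℂ) : Prop :=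
  ∀ τ : ℍ, HasDerivAt (F ∘ ofComplex) (2 * Real.pi * I * F' τ) τ

section HasQDeriv

variable {F G F' G' : ℍ → ℂ}

lemma hasQDeriv_iff : HasQDeriv F F' ↔ MDiff F ∧ D F = F' := by
  have hdiv (a b : ℂ) : (2 * Real.pi * I)⁻¹ * a = b ↔ a = 2 * Real.pi * I * b :=
    inv_mul_eq_iff_eq_mul₀ two_pi_I_ne_zero
  constructor
  · intro h
    exact ⟨fun τ ↦ UpperHalfPlane.mdifferentiableAt_iff.2 (h τ).differentiableAt,
      funext fun τ ↦ (hdiv _ _).2 (h τ).deriv⟩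
  · rintro ⟨hF, rfl⟩ τ
    exact (UpperHalfPlane.mdifferentiableAt_iff.1 (hF τ)).hasDerivAt.congr_deriv ((hdiv _ _).1 rfl)

lemma HasQDeriv.mdifferentiable (h : HasQDeriv F F') : MDiff F := (hasQDeriv_iff.1 h).1

lemma HasQDeriv.eq (h : HasQDeriv F F') : D F = F' := (hasQDeriv_iff.1 h).2

lemma hasQDeriv_normalizedDeriv (h : MDiff F) : HasQDeriv F (D F) := hasQDeriv_iff.2 ⟨h, rfl⟩

lemma HasQDeriv.congr_deriv (h : HasQDeriv F F') (h' : ∀ τ, F' τ = G' τ) : HasQDeriv F G' :=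
  funext h' ▸ h

lemma hasQDeriv_const (c : ℂ) : HasQDeriv (fun _ ↦ c) (fun _ ↦ 0) := fun τ ↦
  (hasDerivAt_const (τ : ℂ) c).congr_deriv (by simp)

lemma HasQDeriv.add (hF : HasQDeriv F F') (hG : HasQDeriv G G') :
    HasQDeriv (F + G) (F' + G') := fun τ ↦
  ((hF τ).add (hG τ)).congr_deriv (mul_add _ _ _).symm

lemma HasQDeriv.mul (hF : HasQDeriv F F') (hG : HasQDeriv G G') :
    HasQDeriv (F * G) (F' * G + F * G') := fun τ ↦
  ((hF τ).mul (hG τ)).congr_deriv <| by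
    simp only [Pi.add_apply, Pi.mul_apply, Function.comp_apply, ofComplex_apply]
    ring

lemma HasQDeriv.const_smul (c : ℂ) (hF : HasQDeriv F F') : HasQDeriv (c • F) (c • F') :=
  ((hasQDeriv_const c).mul hF).congr_deriv fun τ ↦ by simp

lemma HasQDeriv.sub (hF : HasQDeriv F F') (hG : HasQDeriv G G') :
    HasQDeriv (F - G) (F' - G') := fun τ ↦
  ((hF τ).sub (hG τ)).congr_deriv (mul_sub _ _ _).symm

lemma HasQDeriv.pow (hF : HasQDeriv F F') (n : ℕ) :
    HasQDeriv (F ^ n) (n * F ^ (n - 1) * F') := fun τ ↦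
  ((hF τ).pow n).congr_deriv <| by
    simp only [Pi.mul_apply, Pi.pow_apply, Pi.natCast_apply, Function.comp_apply, ofComplex_apply]
    ring

lemma HasQDeriv.div (hF : HasQDeriv F F') (hG : HasQDeriv G G') (hG₀ : ∀ τ, G τ ≠ 0) :
    HasQDeriv (F / G) ((F' * G - F * G') / G ^ 2) := fun τ ↦
  ((hF τ).div (hG τ) (by simpa using hG₀ τ)).congr_deriv <| by
    simp only [Pi.div_apply, Pi.sub_apply, Pi.mul_apply, Pi.pow_apply, Function.comp_apply,
      ofComplex_apply]
    ring

lemma HasQDeriv.polynomial_eval (hF : HasQDeriv F F') (p : Polynomial ℂ) :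
    HasQDeriv (fun τ ↦ p.eval (F τ)) (fun τ ↦ p.derivative.eval (F τ) * F' τ) := fun τ ↦
  ((p.hasDerivAt ((F ∘ ofComplex) τ)).comp (τ : ℂ) (hF τ)).congr_deriv <| by
    simp only [Function.comp_apply, ofComplex_apply]
    ring

lemma hasQDeriv_coe : HasQDeriv (fun τ ↦ (τ : ℂ)) (fun _ ↦ (2 * Real.pi * I)⁻¹) := fun τ ↦ by
  rw [mul_inv_cancel₀ two_pi_I_ne_zero]
  exact (hasDerivAt_id _).congr_of_eventuallyEq (eventuallyEq_coe_comp_ofComplex τ.im_pos)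

lemma HasQDeriv.eq_of_hasQDeriv_zero (h : HasQDeriv F 0) (τ τ' : ℍ) : F τ = F τ' := by
  have hconst : (F ∘ ofComplex) τ = (F ∘ ofComplex) τ' :=
    isOpen_upperHalfPlaneSet.is_const_of_deriv_eq_zero
      (convex_halfSpace_im_gt 0).isPreconnected
      (UpperHalfPlane.mdifferentiable_iff.1 h.mdifferentiable)
      (fun z hz ↦ by simpa using (h ⟨z, hz⟩).deriv) τ.2 τ'.2
  simpa using hconst

end HasQDeriv

section Cauchy

variable {F : ℍ → ℂ}

lemma norm_normalizedDeriv_le {A C : ℝ} (hF : MDiff F) (hbound : ∀ τ : ℍ, A ≤ τ.im → ‖F τ‖ ≤ C)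
    {τ : ℍ} (hτ : A + 1 ≤ τ.im) (hτ' : 1 < τ.im) : ‖D F τ‖ ≤ C := by
  have sub_one_le_im {w : ℂ} (hw : w ∈ Metric.closedBall (τ : ℂ) 1) : τ.im - 1 ≤ w.im := by
    have := (abs_le.1 ((Complex.abs_im_le_norm _).trans (mem_closedBall_iff_norm.1 hw))).1
    rw [Complex.sub_im, coe_im] at this
    linarith
  have hball : Metric.closedBall (τ : ℂ) 1 ⊆ {z | 0 < z.im} := fun w hw ↦ by
    have := sub_one_le_im hw
    simp only [Set.mem_ofPred_eq]
    linarith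
  have hderiv : ‖deriv (F ∘ ofComplex) τ‖ ≤ C / 1 :=
    Complex.norm_deriv_le_of_forall_mem_sphere_norm_le one_pos
      ((UpperHalfPlane.mdifferentiable_iff.1 hF).diffContOnCl_ball hball) fun w hw ↦ by
        have hw' := Metric.sphere_subset_closedBall hw
        rw [Function.comp_apply, ofComplex_apply_of_im_pos (hball hw')]
        exact hbound _ (by linarith [sub_one_le_im hw', show im ⟨w, hball hw'⟩ = w.im from rfl])
  have hpi : 1 ≤ ‖(2 * Real.pi * I : ℂ)‖ := by
    simp only [norm_mul, norm_ofNat, norm_real, Real.norm_eq_abs, abs_of_pos Real.pi_pos, norm_I,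
      mul_one]
    linarith [Real.two_le_pi]
  calc ‖D F τ‖ = ‖(2 * Real.pi * I : ℂ)‖⁻¹ * ‖deriv (F ∘ ofComplex) τ‖ := by
        rw [normalizedDerivOfComplex, norm_mul, norm_inv]
    _ ≤ 1 * (C / 1) := by gcongr; exact inv_le_one_of_one_le₀ hpi
    _ = C := by ring

lemma isBoundedAtImInfty_normalizedDeriv (hF : MDiff F) (hbdd : IsBoundedAtImInfty F) :
    IsBoundedAtImInfty (D F) := by
  obtain ⟨C, A, hCA⟩ := isBoundedAtImInfty_iff.1 hbdd
  refine isBoundedAtImInfty_iff.2 ⟨C, max (A + 1) 2, fun τ hτ ↦ ?_⟩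
  exact norm_normalizedDeriv_le hF hCA (le_of_max_le_left hτ)
    (by linarith [le_of_max_le_right hτ])

lemma isZeroAtImInfty_normalizedDeriv (hF : MDiff F) {c : ℂ} (hlim : Tendsto F atImInfty (𝓝 c)) :
    IsZeroAtImInfty (D F) := by
  have hzero : IsZeroAtImInfty (F - fun _ ↦ c) := by
    rw [IsZeroAtImInfty, ZeroAtFilter, ← sub_self c]
    exact hlim.sub_const c
  have hderiv := (hasQDeriv_normalizedDeriv hF).sub (hasQDeriv_const c)
  refine isZeroAtImInfty_iff.2 fun ε hε ↦ ?_
  obtain ⟨A, hA⟩ := isZeroAtImInfty_iff.1 hzero ε hε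
  refine ⟨max (A + 1) 2, fun τ hτ ↦ ?_⟩
  have := norm_normalizedDeriv_le hderiv.mdifferentiable hA (le_of_max_le_left hτ)
    (by linarith [le_of_max_le_right hτ])
  simpa [hderiv.eq] using this

end Cauchy

section Matrices

/-- The matrix `(2 0; 0 1)`, which acts on `ℍ` as `τ ↦ 2τ`. -/
def doubling : GL (Fin 2) ℝ := .mkOfDetNeZero !![2, 0; 0, 1] (by simp)

/-- The Fricke involution `S₂ = (1/√2)(0 -1; 2 0)`, normalised to determinant one. -/
def fricke : GL (Fin 2) ℝ := .mkOfDetNeZero !![0, -(√2)⁻¹; √2, 0] (by simp)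

lemma det_doubling : doubling.val.det = 2 := by
  simp [doubling, GeneralLinearGroup.mkOfDetNeZero]

lemma det_fricke : fricke.val.det = 1 := by
  simp [fricke, GeneralLinearGroup.mkOfDetNeZero]

lemma coe_doubling_smul (τ : ℍ) : ((doubling • τ : ℍ) : ℂ) = 2 * τ := by
  rw [coe_smul_of_det_pos (by simp [det_doubling])]
  simp [doubling, GeneralLinearGroup.mkOfDetNeZero, num, denom]

lemma ofReal_sqrt_two_sq : ((√2 : ℝ) : ℂ) ^ 2 = 2 := by
  rw [← ofReal_pow, Real.sq_sqrt zero_le_two, ofReal_ofNat]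

lemma ofReal_sqrt_two_mul_sq (z : ℂ) : ((√2 : ℝ) * z) ^ 2 = 2 * z ^ 2 := by
  rw [mul_pow, ofReal_sqrt_two_sq]

lemma ofReal_sqrt_two_ne_zero : ((√2 : ℝ) : ℂ) ≠ 0 := by simp

lemma coe_fricke_smul (τ : ℍ) : ((fricke • τ : ℍ) : ℂ) = -1 / (2 * τ) := by
  rw [coe_smul_of_det_pos (by simp [det_fricke])]
  have hsqrt := ofReal_sqrt_two_ne_zero
  have hτ := τ.ne_zero
  simp only [num, denom, fricke, GeneralLinearGroup.mkOfDetNeZero, GeneralLinearGroup.val_mk',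
    of_apply, cons_val', cons_val_zero, cons_val_one, cons_val_fin_one, ofReal_zero, ofReal_neg,
    ofReal_inv, zero_mul, zero_add, add_zero, Fin.isValue]
  field_simp
  rw [ofReal_sqrt_two_sq]

lemma denom_fricke (τ : ℍ) : denom fricke τ = √2 * τ := by
  simp [denom, fricke, GeneralLinearGroup.mkOfDetNeZero]

lemma coe_S_smul (τ : ℍ) : ((ModularGroup.S • τ : ℍ) : ℂ) = -1 / τ := by
  rw [coe_specialLinearGroup_apply]
  simp [ModularGroup.S]

lemma fricke_smul_eq (τ : ℍ) : fricke • τ = ModularGroup.S • doubling • τ := by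
  ext
  rw [coe_fricke_smul, coe_S_smul, coe_doubling_smul]

lemma doubling_smul_fricke_smul (τ : ℍ) : doubling • fricke • τ = ModularGroup.S • τ := by
  ext
  have hτ := τ.ne_zero
  rw [coe_doubling_smul, coe_fricke_smul, coe_S_smul]
  field_simp

lemma slash_eq_of_det_eq_one {g : GL (Fin 2) ℝ} (hg : g.val.det = 1) (k : ℤ) (F : ℍ → ℂ) (τ : ℍ) :
    (F ∣[k] g) τ = denom g τ ^ (-k) * F (g • τ) := by
  have hdet : g.det.val = 1 := hg
  rw [ModularForm.slash_apply, σ, if_pos (by simp [hg]), hdet]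
  simp [mul_comm]

lemma exists_doubling_smul_smul {γ : SL(2, ℤ)} (hγ : γ ∈ CongruenceSubgroup.Gamma0 2) :
    ∃ γ' : SL(2, ℤ), 2 * γ' 1 0 = γ 1 0 ∧
      ∀ τ : ℍ, doubling • γ • τ = γ' • doubling • τ ∧ denom γ' (doubling • τ : ℍ) = denom γ τ := by
  obtain ⟨c, hc⟩ : (2 : ℤ) ∣ γ 1 0 := by
    simpa using (ZMod.intCast_zmod_eq_zero_iff_dvd _ 2).1 (CongruenceSubgroup.Gamma0_mem.1 hγ)
  have hdet : γ 0 0 * γ 1 1 - 2 * γ 0 1 * c = 1 := by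
    have := γ.det_coe
    rw [det_fin_two, hc] at this
    linarith
  let γ' : SL(2, ℤ) := ⟨!![γ 0 0, 2 * γ 0 1; c, γ 1 1], by rw [det_fin_two_of]; exact hdet⟩
  refine ⟨γ', by simp [γ', hc], fun τ ↦ ⟨?_, ?_⟩⟩
  · ext
    rw [coe_doubling_smul, coe_specialLinearGroup_apply, coe_specialLinearGroup_apply,
      coe_doubling_smul]
    simp only [γ', hc, of_apply, cons_val', cons_val_zero, cons_val_one, cons_val_fin_one,
      algebraMap_int_eq, eq_intCast, ofReal_intCast, Int.cast_mul, Int.cast_ofNat, ofReal_mul,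
      ofReal_ofNat, Fin.isValue]
    ring
  · rw [ModularGroup.denom_apply, ModularGroup.denom_apply, coe_doubling_smul]
    simp only [γ', hc, of_apply, cons_val', cons_val_zero, cons_val_one, cons_val_fin_one,
      Int.cast_mul, Int.cast_ofNat, Fin.isValue]
    ring

end Matrices

/-- A holomorphic modular form of weight `k` for `Γ₀(2)` that is an eigenform of the Fricke
involution with eigenvalue `ε`. As the involution swaps the two cusps of `Γ₀(2)`, boundedness is
only required at `∞`. -/
structure IsFrickeForm (k : ℤ) (ε : ℂ) (F : ℍ → ℂ) : Prop where
  mdifferentiable : MDiff F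
  slash_eq : ∀ γ ∈ CongruenceSubgroup.Gamma0 2, F ∣[k] (γ : GL (Fin 2) ℝ) = F
  slash_fricke : F ∣[k] fricke = ε • F
  isBoundedAtImInfty : IsBoundedAtImInfty F

section Slash

lemma det_coe_SL2Z (γ : SL(2, ℤ)) : (γ : GL (Fin 2) ℝ).val.det = 1 := by
  rw [← GeneralLinearGroup.val_det_apply]
  simp

variable {g : GL (Fin 2) ℝ} {F G : ℍ → ℂ} {k l : ℤ} {ε δ : ℂ}

lemma slash_eq_smul_iff (hg : g.val.det = 1) :
    F ∣[k] g = ε • F ↔ ∀ τ, F (g • τ) = ε * denom g τ ^ k * F τ := by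
  refine funext_iff.trans (forall_congr' fun τ ↦ ?_)
  rw [slash_eq_of_det_eq_one hg, Pi.smul_apply, smul_eq_mul, _root_.zpow_neg,
    inv_mul_eq_iff_eq_mul₀ (zpow_ne_zero _ (denom_ne_zero g τ)), mul_left_comm, mul_assoc]

lemma slash_mul_eq_smul (hg : g.val.det = 1) (hF : F ∣[k] g = ε • F) (hG : G ∣[l] g = δ • G) :
    (F * G) ∣[k + l] g = (ε * δ) • (F * G) := by
  have hdet : g.det.val = 1 := hg
  rw [ModularForm.mul_slash, hdet, hF, hG, abs_one, one_smul, smul_mul_smul_comm]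

lemma slash_div_eq_smul (hg : g.val.det = 1) (hF : F ∣[k] g = ε • F) (hG : G ∣[l] g = δ • G) :
    (F / G) ∣[k - l] g = (ε / δ) • (F / G) := by
  rw [slash_eq_smul_iff hg] at *
  intro τ
  rw [Pi.div_apply, Pi.div_apply, hF, hG, zpow_sub₀ (denom_ne_zero g τ)]
  ring

end Slash

namespace IsFrickeForm

variable {k l : ℤ} {ε δ : ℂ} {F G : ℍ → ℂ}

lemma of_apply (hF : MDiff F)
    (hΓ : ∀ γ ∈ CongruenceSubgroup.Gamma0 2, ∀ τ : ℍ, F (γ • τ) = denom γ τ ^ k * F τ)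
    (hfricke : ∀ τ : ℍ, F (fricke • τ) = ε * (√2 * τ) ^ k * F τ) (hbdd : IsBoundedAtImInfty F) :
    IsFrickeForm k ε F where
  mdifferentiable := hF
  slash_eq γ hγ := ((slash_eq_smul_iff (det_coe_SL2Z γ)).2 fun τ ↦ by
    rw [one_mul]
    exact hΓ γ hγ τ).trans (one_smul ℂ F)
  slash_fricke := (slash_eq_smul_iff det_fricke).2 fun τ ↦ by rw [denom_fricke, hfricke]
  isBoundedAtImInfty := hbdd

lemma slash_eq_one_smul (hF : IsFrickeForm k ε F) {γ : SL(2, ℤ)}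
    (hγ : γ ∈ CongruenceSubgroup.Gamma0 2) : F ∣[k] (γ : GL (Fin 2) ℝ) = (1 : ℂ) • F := by
  rw [hF.slash_eq γ hγ, one_smul]

lemma add (hF : IsFrickeForm k ε F) (hG : IsFrickeForm k ε G) : IsFrickeForm k ε (F + G) where
  mdifferentiable := hF.mdifferentiable.add hG.mdifferentiable
  slash_eq γ hγ := by rw [SlashAction.add_slash, hF.slash_eq γ hγ, hG.slash_eq γ hγ]
  slash_fricke := by rw [SlashAction.add_slash, hF.slash_fricke, hG.slash_fricke, smul_add]
  isBoundedAtImInfty := hF.isBoundedAtImInfty.add hG.isBoundedAtImInfty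

lemma mul (hF : IsFrickeForm k ε F) (hG : IsFrickeForm l δ G) :
    IsFrickeForm (k + l) (ε * δ) (F * G) where
  mdifferentiable := hF.mdifferentiable.mul hG.mdifferentiable
  slash_eq γ hγ := by
    simpa using slash_mul_eq_smul (det_coe_SL2Z γ) (hF.slash_eq_one_smul hγ)
      (hG.slash_eq_one_smul hγ)
  slash_fricke := slash_mul_eq_smul det_fricke hF.slash_fricke hG.slash_fricke
  isBoundedAtImInfty := hF.isBoundedAtImInfty.mul hG.isBoundedAtImInfty

lemma const (c : ℂ) : IsFrickeForm 0 1 fun _ ↦ c :=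
  of_apply mdifferentiable_const (by simp) (by simp) (Filter.const_boundedAtFilter _ c)

lemma const_smul (c : ℂ) (hF : IsFrickeForm k ε F) : IsFrickeForm k ε (c • F) := by
  simpa using! (const c).mul hF

lemma sub (hF : IsFrickeForm k ε F) (hG : IsFrickeForm k ε G) : IsFrickeForm k ε (F - G) := by
  simpa [sub_eq_add_neg] using hF.add (hG.const_smul (-1))

lemma pow (hF : IsFrickeForm k ε F) (n : ℕ) : IsFrickeForm (n * k) (ε ^ n) (F ^ n) := by
  induction n with
  | zero => simpa using! const 1
  | succ n ih => simpa [pow_succ, add_mul] using ih.mul hF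

lemma div (hF : IsFrickeForm k ε F) (hG : IsFrickeForm l δ G) (hG₀ : ∀ τ, G τ ≠ 0)
    (hbdd : IsBoundedAtImInfty (F / G)) : IsFrickeForm (k - l) (ε / δ) (F / G) where
  mdifferentiable := ((hasQDeriv_normalizedDeriv hF.mdifferentiable).div
    (hasQDeriv_normalizedDeriv hG.mdifferentiable) hG₀).mdifferentiable
  slash_eq γ hγ := by
    simpa using slash_div_eq_smul (det_coe_SL2Z γ) (hF.slash_eq_one_smul hγ)
      (hG.slash_eq_one_smul hγ)
  slash_fricke := slash_div_eq_smul det_fricke hF.slash_fricke hG.slash_fricke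
  isBoundedAtImInfty := hbdd

end IsFrickeForm

section Eisenstein

lemma E2_coe (τ : ℍ) : E2 τ = EisensteinSeries.E2 τ := by
  rw [E2, EisensteinSeries.E2_eq_tsum_cexp, tsum_pnat_eq_tsum_succ
    (f := fun n ↦ (ArithmeticFunction.sigma 1 n : ℂ) * cexp (2 * Real.pi * I * τ) ^ n)]
  rfl

lemma E4_coe (τ : ℍ) : E4 τ = ModularForm.E₄ τ := by
  have hbernoulli : bernoulli 4 = -1 / 30 := by
    rw [bernoulli_eq_bernoulli'_of_ne_one (by norm_num), bernoulli'_four]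
  rw [E4, EisensteinSeries.q_expansion_bernoulli _ (by decide), hbernoulli]
  simp only [zpow_natCast]
  rw [tsum_pnat_eq_tsum_succ
    (f := fun n ↦ (ArithmeticFunction.sigma (4 - 1) n : ℂ) * cexp (2 * Real.pi * I * τ) ^ n)]
  simp only [qexp]
  push_cast
  norm_num

lemma E2_smul (γ : SL(2, ℤ)) (τ : ℍ) :
    EisensteinSeries.E2 (γ • τ) = denom γ τ ^ 2 * EisensteinSeries.E2 τ +
      12 * (2 * Real.pi * I)⁻¹ * γ 1 0 * denom γ τ := by
  have h := congrFun (EisensteinSeries.E2_slash_action γ) τ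
  have hdenom := denom_ne_zero γ τ
  rw [ModularForm.SL_slash_apply, Pi.sub_apply, Pi.smul_apply, EisensteinSeries.D2, smul_eq_mul,
    riemannZeta_two, _root_.zpow_neg, ← eq_mul_inv_iff_mul_eq₀ (by positivity)] at h
  rw [h]
  have hpi : (Real.pi : ℂ) ≠ 0 := ofReal_ne_zero.2 Real.pi_ne_zero
  have hI : I⁻¹ = -I := inv_I
  simp only [mul_inv, hI]
  field_simp
  ring

end Eisenstein

section Doubling

variable {F : ℍ → ℂ}

lemma mdifferentiable_comp_doubling (hF : MDiff F) : MDiff fun τ ↦ F (doubling • τ) := by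
  have hslash : F ∣[(1 : ℤ)] doubling = fun τ ↦ F (doubling • τ) := by
    ext τ
    rw [ModularForm.slash_apply, σ, if_pos (by simp [det_doubling])]
    simp [denom, doubling, GeneralLinearGroup.mkOfDetNeZero]
  exact hslash ▸ hF.slash 1 doubling

lemma tendsto_doubling_smul_atImInfty : Tendsto (fun τ : ℍ ↦ doubling • τ) atImInfty atImInfty :=
  tendsto_smul_atImInfty (by simp [doubling, GeneralLinearGroup.mkOfDetNeZero])

end Doubling

section LevelOne

variable {k : ℤ} {M : Type*} [FunLike M ℍ ℂ] [ModularFormClass M 𝒮ℒ k] (f : M)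

lemma levelOne_apply_smul (γ : SL(2, ℤ)) (τ : ℍ) : f (γ • τ) = denom γ τ ^ k * f τ :=
  SlashInvariantForm.slash_action_eqn'' (Γ := 𝒮ℒ) f (γ := SpecialLinearGroup.mapGL ℝ γ) ⟨γ, rfl⟩ τ

lemma levelOne_apply_doubling_smul_smul {γ : SL(2, ℤ)} (hγ : γ ∈ CongruenceSubgroup.Gamma0 2)
    (τ : ℍ) : f (doubling • γ • τ) = denom γ τ ^ k * f (doubling • τ) := by
  obtain ⟨γ', -, hγ'⟩ := exists_doubling_smul_smul hγ
  rw [(hγ' τ).1, levelOne_apply_smul f γ', (hγ' τ).2]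

lemma levelOne_apply_fricke_smul (τ : ℍ) :
    f (fricke • τ) = (2 * τ) ^ k * f (doubling • τ) := by
  rw [fricke_smul_eq, levelOne_apply_smul f, ModularGroup.denom_S, coe_doubling_smul]

lemma levelOne_apply_doubling_smul_fricke_smul (τ : ℍ) :
    f (doubling • fricke • τ) = (τ : ℂ) ^ k * f τ := by
  rw [doubling_smul_fricke_smul, levelOne_apply_smul f, ModularGroup.denom_S]

end LevelOne

section WeightTwo

/-- The Fricke form `M₂` of weight `2`, as a function on `ℍ`. -/
def M2 (τ : ℍ) : ℂ := M2minus τ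

/-- The quasimodular form `M₂*` of weight `2`, as a function on `ℍ`. -/
def M2star (τ : ℍ) : ℂ := M2star2 τ

lemma M2_eq (τ : ℍ) :
    M2 τ = 2 * EisensteinSeries.E2 (doubling • τ) - EisensteinSeries.E2 τ := by
  rw [M2, M2minus, ← E2_coe, ← E2_coe, coe_doubling_smul]

lemma M2star_eq (τ : ℍ) :
    M2star τ = (2 * EisensteinSeries.E2 (doubling • τ) + EisensteinSeries.E2 τ) / 3 := by
  rw [M2star, M2star2, ← E2_coe, ← E2_coe, coe_doubling_smul]

lemma E2_doubling_smul_smul {γ : SL(2, ℤ)} (hγ : γ ∈ CongruenceSubgroup.Gamma0 2) (τ : ℍ) :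
    EisensteinSeries.E2 (doubling • γ • τ) =
      denom γ τ ^ 2 * EisensteinSeries.E2 (doubling • τ) +
        6 * (2 * Real.pi * I)⁻¹ * γ 1 0 * denom γ τ := by
  obtain ⟨γ', hc, hγ'⟩ := exists_doubling_smul_smul hγ
  rw [(hγ' τ).1, E2_smul, (hγ' τ).2, ← hc]
  push_cast
  ring

lemma E2_fricke_smul (τ : ℍ) :
    EisensteinSeries.E2 (fricke • τ) = (2 * τ) ^ 2 * EisensteinSeries.E2 (doubling • τ) +
      12 * (2 * Real.pi * I)⁻¹ * (2 * τ) := by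
  rw [fricke_smul_eq, E2_smul, ModularGroup.denom_S, coe_doubling_smul]
  simp [ModularGroup.S]

lemma E2_doubling_smul_fricke_smul (τ : ℍ) :
    EisensteinSeries.E2 (doubling • fricke • τ) = τ ^ 2 * EisensteinSeries.E2 τ +
      12 * (2 * Real.pi * I)⁻¹ * τ := by
  rw [doubling_smul_fricke_smul, E2_smul, ModularGroup.denom_S]
  simp [ModularGroup.S]

lemma mdifferentiable_E2_doubling : MDiff fun τ ↦ EisensteinSeries.E2 (doubling • τ) :=
  mdifferentiable_comp_doubling E2_mdifferentiable

lemma isBoundedAtImInfty_E2_doubling :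
    IsBoundedAtImInfty fun τ ↦ EisensteinSeries.E2 (doubling • τ) :=
  EisensteinSeries.isBoundedAtImInfty_E2.comp_tendsto tendsto_doubling_smul_atImInfty

lemma isFrickeForm_M2 : IsFrickeForm 2 (-1) M2 := by
  have hM2 : M2 = (2 : ℂ) • (fun τ ↦ EisensteinSeries.E2 (doubling • τ)) - EisensteinSeries.E2 :=
    funext M2_eq
  refine .of_apply ?_ (fun γ hγ τ ↦ ?_) (fun τ ↦ ?_) ?_
  · exact hM2 ▸ (mdifferentiable_E2_doubling.const_smul 2).sub E2_mdifferentiable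
  · rw [M2_eq, M2_eq, E2_doubling_smul_smul hγ, E2_smul, zpow_ofNat]
    ring
  · rw [M2_eq, M2_eq, E2_doubling_smul_fricke_smul, E2_fricke_smul, zpow_ofNat,
      ofReal_sqrt_two_mul_sq]
    ring
  · exact hM2 ▸ (isBoundedAtImInfty_E2_doubling.smul 2).sub EisensteinSeries.isBoundedAtImInfty_E2

lemma M2star_eq_smul : M2star = (3 : ℂ)⁻¹ •
    ((2 : ℂ) • (fun τ ↦ EisensteinSeries.E2 (doubling • τ)) + EisensteinSeries.E2) := by
  ext τ
  simp [M2star_eq, div_eq_inv_mul]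

lemma mdifferentiable_M2star : MDiff M2star :=
  M2star_eq_smul ▸
    ((mdifferentiable_E2_doubling.const_smul 2).add E2_mdifferentiable).const_smul _

lemma isBoundedAtImInfty_M2star : IsBoundedAtImInfty M2star :=
  M2star_eq_smul ▸
    ((isBoundedAtImInfty_E2_doubling.smul 2).add EisensteinSeries.isBoundedAtImInfty_E2).smul _

/-- The weight-two cocycle `g ↦ (2πi)⁻¹ c / (cτ + d)` measuring the failure of quasimodular forms to
be modular. -/
def slashCocycle (g : GL (Fin 2) ℝ) (τ : ℍ) : ℂ := (2 * Real.pi * I)⁻¹ * (g 1 0 / denom g τ)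

lemma slash_M2star_of_apply {g : GL (Fin 2) ℝ} (hg : g.val.det = 1)
    (h : ∀ τ : ℍ, M2star (g • τ) =
      denom g τ ^ 2 * M2star τ + 8 * (2 * Real.pi * I)⁻¹ * g 1 0 * denom g τ) :
    M2star ∣[(2 : ℤ)] g = M2star + (8 : ℂ) • slashCocycle g := by
  ext τ
  have hdenom := denom_ne_zero g τ
  rw [slash_eq_of_det_eq_one hg, h, _root_.zpow_neg, zpow_ofNat, Pi.add_apply, Pi.smul_apply,
    smul_eq_mul, slashCocycle]
  field_simp

lemma slash_M2star {γ : SL(2, ℤ)} (hγ : γ ∈ CongruenceSubgroup.Gamma0 2) :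
    M2star ∣[(2 : ℤ)] (γ : GL (Fin 2) ℝ) = M2star + (8 : ℂ) • slashCocycle γ :=
  slash_M2star_of_apply (det_coe_SL2Z γ) fun τ ↦ by
    refine (M2star_eq (γ • τ)).trans ?_
    rw [M2star_eq, E2_doubling_smul_smul hγ, E2_smul]
    simp only [SpecialLinearGroup.coe_GL_coe_matrix, SpecialLinearGroup.map_apply_coe,
      RingHom.mapMatrix_apply, Int.coe_castRingHom, map_apply, ofReal_intCast]
    ring

lemma slash_fricke_M2star :
    M2star ∣[(2 : ℤ)] fricke = M2star + (8 : ℂ) • slashCocycle fricke :=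
  slash_M2star_of_apply det_fricke fun τ ↦ by
    have hentry : ((fricke 1 0 : ℝ) : ℂ) * (√2 * τ) = 2 * τ := by
      rw [← ofReal_sqrt_two_sq]
      simp only [fricke, GeneralLinearGroup.mkOfDetNeZero, GeneralLinearGroup.val_mk', of_apply,
        cons_val', cons_val_zero, cons_val_one, cons_val_fin_one, Fin.isValue]
      ring
    rw [M2star_eq, M2star_eq, E2_doubling_smul_fricke_smul, E2_fricke_smul, denom_fricke,
      ofReal_sqrt_two_mul_sq]
    linear_combination (-8 * (2 * Real.pi * I)⁻¹) * hentry

end WeightTwo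

section Serre

variable {g : GL (Fin 2) ℝ} {F : ℍ → ℂ} {k : ℤ} {ε : ℂ}

/-- The Serre derivative `D F - (k/8) M₂* F` for `Γ₀⁺(2)` in weight `k`. -/
def frickeSerre (k : ℤ) (F : ℍ → ℂ) : ℍ → ℂ := D F - ((k : ℂ) / 8) • (M2star * F)

lemma slash_frickeSerre (hg : g.val.det = 1)
    (hM2star : M2star ∣[(2 : ℤ)] g = M2star + (8 : ℂ) • slashCocycle g)
    (hF : MDiff F) (hslash : F ∣[k] g = ε • F) :
    frickeSerre k F ∣[k + 2] g = ε • frickeSerre k F := by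
  have hdet : g.det.val = 1 := hg
  have hderiv := normalizedDerivOfComplex_slash (k := k) hF (hg ▸ one_pos)
  rw [hslash, ((hasQDeriv_normalizedDeriv hF).const_smul ε).eq, hg] at hderiv
  have hmul : (M2star * F) ∣[k + 2] g = M2star ∣[(2 : ℤ)] g * F ∣[k] g := by
    rw [add_comm, ModularForm.mul_slash, hdet, abs_one, one_smul]
  ext τ
  have hderivτ := congrFun hderiv τ
  have hmulτ := congrFun hmul τ
  rw [hM2star, hslash] at hmulτ
  rw [slash_eq_of_det_eq_one hg] at hmulτ ⊢
  simp only [slash_eq_of_det_eq_one hg, frickeSerre, slashCocycle, Pi.sub_apply,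
    Pi.smul_apply, Pi.mul_apply, Pi.add_apply, smul_eq_mul, ofReal_one, inv_one, one_mul]
    at hderivτ hmulτ ⊢
  linear_combination -hderivτ - (k : ℂ) / 8 * hmulτ

lemma IsFrickeForm.frickeSerre (hF : IsFrickeForm k ε F) :
    IsFrickeForm (k + 2) ε (frickeSerre k F) where
  mdifferentiable := (normalizedDerivOfComplex_mdifferentiable hF.mdifferentiable).sub
    ((mdifferentiable_M2star.mul hF.mdifferentiable).const_smul _)
  slash_eq γ hγ := by
    simpa using slash_frickeSerre (det_coe_SL2Z γ) (slash_M2star hγ) hF.mdifferentiable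
      (hF.slash_eq_one_smul hγ)
  slash_fricke := slash_frickeSerre det_fricke slash_fricke_M2star hF.mdifferentiable
    hF.slash_fricke
  isBoundedAtImInfty :=
    (isBoundedAtImInfty_normalizedDeriv hF.mdifferentiable hF.isBoundedAtImInfty).sub
      ((isBoundedAtImInfty_M2star.mul hF.isBoundedAtImInfty).smul _)

lemma hasQDeriv_slashCocycle (g : GL (Fin 2) ℝ) :
    HasQDeriv (slashCocycle g) (-slashCocycle g ^ 2) := fun τ ↦ by
  have hinv := (hasDerivAt_denom_zpow g (-1) τ).const_mul ((2 * Real.pi * I)⁻¹ * g 1 0)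
  refine (hinv.congr_of_eventuallyEq ?_).congr_deriv ?_
  · filter_upwards [eventuallyEq_coe_comp_ofComplex τ.im_pos] with z hz
    simp only [Function.comp_apply, id_eq] at hz
    simp [slashCocycle, hz, div_eq_mul_inv, mul_assoc]
  · have hdenom := denom_ne_zero g τ
    simp only [slashCocycle, Pi.neg_apply, Pi.pow_apply, Int.reduceNeg, Int.reduceSub,
      _root_.zpow_neg, zpow_ofNat, Int.cast_neg, Int.cast_one]
    field_simp

lemma slash_normalizedDeriv_M2star_sub_sq (hg : g.val.det = 1)
    (hM2star : M2star ∣[(2 : ℤ)] g = M2star + (8 : ℂ) • slashCocycle g) :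
    (D M2star - (8 : ℂ)⁻¹ • M2star ^ 2) ∣[(4 : ℤ)] g = D M2star - (8 : ℂ)⁻¹ • M2star ^ 2 := by
  have hdet : g.det.val = 1 := hg
  have hderiv := normalizedDerivOfComplex_slash (k := 2) mdifferentiable_M2star (hg ▸ one_pos)
  have hsum := (hasQDeriv_normalizedDeriv mdifferentiable_M2star).add
    ((hasQDeriv_slashCocycle g).const_smul 8)
  rw [hM2star, hsum.eq, hg] at hderiv
  have hmul : (M2star * M2star) ∣[(4 : ℤ)] g = M2star ∣[(2 : ℤ)] g * M2star ∣[(2 : ℤ)] g := by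
    rw [show (4 : ℤ) = 2 + 2 from rfl, ModularForm.mul_slash, hdet, abs_one, one_smul]
  ext τ
  have hderivτ := congrFun hderiv τ
  have hmulτ := congrFun hmul τ
  rw [hM2star] at hmulτ
  simp only [slash_eq_of_det_eq_one hg, slashCocycle, Pi.sub_apply, Pi.smul_apply, Pi.mul_apply,
    Pi.add_apply, Pi.neg_apply, Pi.pow_apply, smul_eq_mul, ofReal_one, inv_one, one_mul,
    Int.cast_ofNat, Int.reduceAdd] at hderivτ hmulτ ⊢
  linear_combination -hderivτ - (8 : ℂ)⁻¹ * hmulτ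

lemma isFrickeForm_normalizedDeriv_M2star_sub_sq :
    IsFrickeForm 4 1 (D M2star - (8 : ℂ)⁻¹ • M2star ^ 2) where
  mdifferentiable := (normalizedDerivOfComplex_mdifferentiable mdifferentiable_M2star).sub
    ((mdifferentiable_M2star.pow 2).const_smul _)
  slash_eq γ hγ := slash_normalizedDeriv_M2star_sub_sq (det_coe_SL2Z γ) (slash_M2star hγ)
  slash_fricke := by
    rw [one_smul, slash_normalizedDeriv_M2star_sub_sq det_fricke slash_fricke_M2star]
  isBoundedAtImInfty :=
    (isBoundedAtImInfty_normalizedDeriv mdifferentiable_M2star isBoundedAtImInfty_M2star).sub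
      ((sq M2star ▸ isBoundedAtImInfty_M2star.mul isBoundedAtImInfty_M2star).smul _)

end Serre

section QLimits

lemma qexp_eq_qParam : qexp = Function.Periodic.qParam 1 := by
  ext z
  simp [qexp, Function.Periodic.qParam]

lemma qexp_ne_zero (z : ℂ) : qexp z ≠ 0 := exp_ne_zero _

lemma norm_qexp (z : ℂ) : ‖qexp z‖ = Real.exp (-2 * Real.pi * z.im) := by
  rw [qexp_eq_qParam, Function.Periodic.norm_qParam, div_one]

lemma norm_qexp_lt_one (τ : ℍ) : ‖qexp τ‖ < 1 := by
  rw [qexp_eq_qParam]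
  exact Function.Periodic.norm_qParam_lt_one one_pos τ.im_pos

lemma qexp_doubling_smul (τ : ℍ) : qexp (doubling • τ : ℍ) = qexp τ ^ 2 := by
  rw [coe_doubling_smul, qexp, qexp, ← Complex.exp_nat_mul]
  congr 1
  push_cast
  ring

lemma tendsto_qexp_atImInfty : Tendsto (fun τ : ℍ ↦ qexp τ) atImInfty (𝓝 0) := by
  rw [qexp_eq_qParam]
  exact qParam_tendsto_atImInfty one_pos

variable {F : ℍ → ℂ} {c : ℕ → ℂ}

lemma hasSum_sub_div_qexp (hF : ∀ τ : ℍ, HasSum (fun m ↦ c m • qexp τ ^ m) (F τ)) (τ : ℍ) :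
    HasSum (fun m ↦ c (m + 1) • qexp τ ^ m) ((F τ - c 0) / qexp τ) := by
  have htail : HasSum (fun m ↦ c (m + 1) • qexp τ ^ (m + 1)) (F τ - c 0) := by
    simpa using (hasSum_nat_add_iff' 1).2 (hF τ)
  refine (htail.div_const (qexp τ)).congr_fun fun m ↦ ?_
  rw [pow_succ, smul_eq_mul, smul_eq_mul, ← mul_assoc, mul_div_cancel_right₀ _ (qexp_ne_zero _)]

lemma tendsto_of_hasSum_qexp (hF : ∀ τ : ℍ, HasSum (fun m ↦ c m • qexp τ ^ m) (F τ)) :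
    Tendsto F atImInfty (𝓝 (c 0)) := by
  have hbdd : IsBoundedAtImInfty fun τ : ℍ ↦ (F τ - c 0) / qexp τ :=
    isBoundedAtImInfty_of_hasSum_qExpansion one_pos
      (by simpa only [← qexp_eq_qParam] using hasSum_sub_div_qexp hF)
  have hzero := (hbdd.mul_zeroAtFilter tendsto_qexp_atImInfty).add_const (c 0)
  rw [zero_add] at hzero
  refine hzero.congr fun τ ↦ ?_
  rw [Pi.mul_apply, div_mul_cancel₀ _ (qexp_ne_zero _), sub_add_cancel]

lemma tendsto_sub_div_qexp_of_hasSum (hF : ∀ τ : ℍ, HasSum (fun m ↦ c m • qexp τ ^ m) (F τ)) :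
    Tendsto (fun τ : ℍ ↦ (F τ - c 0) / qexp τ) atImInfty (𝓝 (c 1)) :=
  tendsto_of_hasSum_qexp (hasSum_sub_div_qexp hF)

lemma hasSum_E2_qexp (τ : ℍ) :
    HasSum (fun m : ℕ ↦ (if m = 0 then 1 else -24 * ArithmeticFunction.sigma 1 m : ℂ) • qexp τ ^ m)
      (EisensteinSeries.E2 τ) :=
  EisensteinSeries.hasSum_qExpansion_E2 τ

lemma tendsto_E2_sub_one_div_qexp :
    Tendsto (fun τ : ℍ ↦ (EisensteinSeries.E2 τ - 1) / qexp τ) atImInfty (𝓝 (-24)) := by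
  simpa using tendsto_sub_div_qexp_of_hasSum hasSum_E2_qexp

lemma tendsto_E2_doubling_sub_one_div_qexp :
    Tendsto (fun τ : ℍ ↦ (EisensteinSeries.E2 (doubling • τ) - 1) / qexp τ) atImInfty (𝓝 0) := by
  have h := (tendsto_E2_sub_one_div_qexp.comp tendsto_doubling_smul_atImInfty).mul
    tendsto_qexp_atImInfty
  rw [mul_zero] at h
  refine h.congr fun τ ↦ ?_
  rw [Function.comp_apply, qexp_doubling_smul]
  field_simp [qexp_ne_zero]

lemma tendsto_M2_sub_one_div_qexp :
    Tendsto (fun τ : ℍ ↦ (M2 τ - 1) / qexp τ) atImInfty (𝓝 24) := by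
  have h := (tendsto_E2_doubling_sub_one_div_qexp.const_mul 2).sub tendsto_E2_sub_one_div_qexp
  norm_num at h
  refine h.congr fun τ ↦ ?_
  rw [M2_eq]
  ring

lemma tendsto_M2star_sub_one_div_qexp :
    Tendsto (fun τ : ℍ ↦ (M2star τ - 1) / qexp τ) atImInfty (𝓝 (-8)) := by
  have h := ((tendsto_E2_doubling_sub_one_div_qexp.const_mul 2).add
    tendsto_E2_sub_one_div_qexp).div_const 3
  norm_num at h
  refine h.congr fun τ ↦ ?_
  rw [M2star_eq]
  ring

lemma tendsto_of_tendsto_sub_div_qexp {a b : ℂ}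
    (h : Tendsto (fun τ : ℍ ↦ (F τ - a) / qexp τ) atImInfty (𝓝 b)) :
    Tendsto F atImInfty (𝓝 a) := by
  have hprod := (h.mul tendsto_qexp_atImInfty).add_const a
  rw [mul_zero, zero_add] at hprod
  refine hprod.congr fun τ ↦ ?_
  rw [div_mul_cancel₀ _ (qexp_ne_zero _), sub_add_cancel]

end QLimits

section Eta

lemma HasQDeriv.comp_doubling {F F' : ℍ → ℂ} (hF : HasQDeriv F F') :
    HasQDeriv (fun τ ↦ F (doubling • τ)) (fun τ ↦ 2 * F' (doubling • τ)) := fun τ ↦ by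
  have hmul : HasDerivAt (fun z : ℂ ↦ 2 * z) 2 τ := by
    simpa using (hasDerivAt_id (τ : ℂ)).const_mul 2
  have hcomp := HasDerivAt.comp (τ : ℂ) (coe_doubling_smul τ ▸ hF (doubling • τ)) hmul
  refine (hcomp.congr_of_eventuallyEq ?_).congr_deriv (by ring)
  filter_upwards [eventuallyEq_coe_comp_ofComplex τ.im_pos] with z hz
  simp only [Function.comp_apply, id_eq] at hz ⊢
  rw [← ofComplex_apply (doubling • ofComplex z), coe_doubling_smul, hz]

lemma hasQDeriv_eta : HasQDeriv (fun τ ↦ ModularForm.eta τ)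
    (fun τ ↦ EisensteinSeries.E2 τ / 24 * ModularForm.eta τ) := fun τ ↦ by
  have hlog := ModularForm.logDeriv_eta_eq_E2 τ
  rw [logDeriv_apply, div_eq_iff (ModularForm.eta_ne_zero τ.2)] at hlog
  have hderiv := (ModularForm.differentiableAt_eta_of_mem_upperHalfPlaneSet τ.2).hasDerivAt
  refine (hderiv.congr_of_eventuallyEq ?_).congr_deriv ?_
  · filter_upwards [eventuallyEq_coe_comp_ofComplex τ.im_pos] with z hz
    simp only [Function.comp_apply, id_eq] at hz ⊢
    rw [hz]
  · rw [hlog]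
    ring

/-- The eta quotient `(η(τ) η(2τ))⁴`, a square root of `M₈`. -/
def eta4 (τ : ℍ) : ℂ := (ModularForm.eta τ * ModularForm.eta (doubling • τ : ℍ)) ^ 4

lemma eta4_ne_zero (τ : ℍ) : eta4 τ ≠ 0 :=
  pow_ne_zero _ (mul_ne_zero (ModularForm.eta_ne_zero τ.2)
    (ModularForm.eta_ne_zero (doubling • τ).2))

lemma eta4_pow_ne_zero (n : ℕ) (τ : ℍ) : (eta4 ^ n) τ ≠ 0 := pow_ne_zero n (eta4_ne_zero τ)

lemma hasQDeriv_eta4 : HasQDeriv eta4 ((2 : ℂ)⁻¹ • (M2star * eta4)) :=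
  ((hasQDeriv_eta.mul hasQDeriv_eta.comp_doubling).pow 4).congr_deriv fun τ ↦ by
    simp only [Pi.mul_apply, Pi.add_apply, Pi.pow_apply, Pi.smul_apply, smul_eq_mul, eta4,
      M2star_eq, Nat.reduceSub, Pi.natCast_apply]
    push_cast
    ring

/-- The Euler product `∏ (1 - qⁿ)` over `n ≥ 1`. -/
def eulerProduct (τ : ℍ) : ℂ := ∏' n : ℕ, (1 - qexp τ ^ (n + 1))

lemma tendsto_eulerProduct_atImInfty : Tendsto eulerProduct atImInfty (𝓝 1) := by
  have hcont := (ModularForm.differentiableOn_tprod_one_sub_pow.differentiableAt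
    (Metric.ball_mem_nhds 0 one_pos)).continuousAt.tendsto
  simp only [ne_eq, Nat.add_eq_zero_iff, one_ne_zero, and_false, not_false_eq_true, zero_pow,
    sub_zero, tprod_one] at hcont
  exact hcont.comp tendsto_qexp_atImInfty

lemma eta_eq_eulerProduct (τ : ℍ) :
    ModularForm.eta τ = cexp (2 * Real.pi * I * τ / 24) * eulerProduct τ := by
  simp only [ModularForm.eta, ModularForm.eta_q_eq_pow, eulerProduct, qexp,
    Function.Periodic.qParam, ofReal_ofNat]

lemma eta4_eq (τ : ℍ) : eta4 τ =
    cexp (Real.pi * I * τ) * (eulerProduct τ * eulerProduct (doubling • τ)) ^ 4 := by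
  have hexp : cexp (Real.pi * I * τ) =
      (cexp (2 * Real.pi * I * τ / 24) * cexp (2 * Real.pi * I * (2 * τ) / 24)) ^ 4 := by
    rw [← Complex.exp_add, ← Complex.exp_nat_mul]
    congr 1
    push_cast
    ring
  rw [eta4, eta_eq_eulerProduct, eta_eq_eulerProduct, coe_doubling_smul, hexp]
  ring

lemma tprod_one_sub_qexp_pow_mul (τ : ℍ) (n : ℕ) :
    ∏' m : ℕ, ((1 - qexp τ ^ (m + 1)) ^ n * (1 - qexp τ ^ (2 * (m + 1))) ^ n) =
      (eulerProduct τ * eulerProduct (doubling • τ)) ^ n := by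
  have hmul := ModularForm.multipliable_one_sub_pow (norm_qexp_lt_one τ)
  have hmul₂ := ModularForm.multipliable_one_sub_pow (norm_qexp_lt_one (doubling • τ))
  rw [eulerProduct, eulerProduct, mul_pow, ← hmul.tprod_pow, ← hmul₂.tprod_pow,
    ← (hmul.pow n).tprod_mul (hmul₂.pow n)]
  simp only [qexp_doubling_smul, pow_mul]

lemma Pfun2_eq (k : ℕ) (τ : ℍ) : Pfun2 k τ = eta4 τ ^ k := by
  rw [Pfun2, tprod_one_sub_qexp_pow_mul, eta4_eq, mul_pow (cexp _), ← pow_mul,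
    ← Complex.exp_nat_mul]
  congr 2
  ring

lemma cexp_pi_mul_I_sq (z : ℂ) : cexp (Real.pi * I * z) ^ 2 = qexp z := by
  rw [qexp, ← Complex.exp_nat_mul]
  congr 1
  push_cast
  ring

lemma M8fun_eq (τ : ℍ) : M8fun τ = eta4 τ ^ 2 := by
  rw [M8fun, tprod_one_sub_qexp_pow_mul, eta4_eq, mul_pow (cexp _), cexp_pi_mul_I_sq,
    ← pow_mul]

lemma cexp_pi_mul_I_two_add (z : ℂ) : cexp (Real.pi * I * (2 + z)) = cexp (Real.pi * I * z) := by
  rw [mul_add, mul_comm _ (2 : ℂ), ← mul_assoc, Complex.exp_add, exp_two_pi_mul_I, one_mul]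

lemma qexp_two_add (z : ℂ) : qexp (2 + z) = qexp z := by
  rw [← cexp_pi_mul_I_sq, cexp_pi_mul_I_two_add, cexp_pi_mul_I_sq]

lemma eta4_two_vadd (τ : ℍ) : eta4 ((2 : ℝ) +ᵥ τ) = eta4 τ := by
  simp only [eta4_eq, eulerProduct, qexp_doubling_smul, qexp_two_add, coe_vadd, ofReal_ofNat,
    cexp_pi_mul_I_two_add]

lemma M2star_two_vadd (τ : ℍ) : M2star ((2 : ℝ) +ᵥ τ) = M2star τ := by
  have hdouble : (2 : ℂ) * (2 + τ) = 2 + (2 + 2 * τ) := by ring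
  simp only [M2star, M2star2, E2, coe_vadd, ofReal_ofNat, hdouble, qexp_two_add]

lemma tendsto_eta4_sq_div_qexp : Tendsto (fun τ : ℍ ↦ eta4 τ ^ 2 / qexp τ) atImInfty (𝓝 1) := by
  have h := (tendsto_eulerProduct_atImInfty.mul
    (tendsto_eulerProduct_atImInfty.comp tendsto_doubling_smul_atImInfty)).pow 8
  rw [one_mul, one_pow] at h
  refine h.congr fun τ ↦ ?_
  rw [eta4_eq, mul_pow _ _ 2, cexp_pi_mul_I_sq, mul_div_cancel_left₀ _ (qexp_ne_zero _), ← pow_mul]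
  rfl

end Eta

section CuspVanishing

lemma exists_mul_S_mul_T_zpow {γ : SL(2, ℤ)} (hγ : γ ∉ CongruenceSubgroup.Gamma0 2) :
    ∃ δ ∈ CongruenceSubgroup.Gamma0 2, ∃ n : ℤ, γ = δ * ModularGroup.S * ModularGroup.T ^ n := by
  have hodd : ((γ 1 0 : ℤ) : ZMod 2) = 1 := by
    have hcases : ∀ c : ZMod 2, c ≠ 0 → c = 1 := by decide
    exact hcases _ fun h ↦ hγ (CongruenceSubgroup.Gamma0_mem.2 h)
  refine ⟨γ * ModularGroup.T ^ (-γ 1 1) * ModularGroup.S⁻¹, ?_, γ 1 1, by group⟩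
  have hentry : (γ * ModularGroup.T ^ (-γ 1 1) * ModularGroup.S⁻¹) 1 0 =
      γ 1 0 * γ 1 1 - γ 1 1 := by
    rw [Matrix.SpecialLinearGroup.coe_mul, Matrix.SpecialLinearGroup.coe_mul,
      ModularGroup.coe_T_zpow, Matrix.SpecialLinearGroup.coe_inv, ModularGroup.coe_S]
    simp only [mul_apply, adjugate_fin_two, Fin.sum_univ_two, of_apply, cons_val', cons_val_zero,
      cons_val_one, cons_val_fin_one, Fin.isValue]
    ring
  rw [CongruenceSubgroup.Gamma0_mem, hentry]
  push_cast
  rw [hodd, one_mul, sub_self]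

lemma coe_S_mul_T_zpow (n : ℤ) :
    ((ModularGroup.S * ModularGroup.T ^ n : SL(2, ℤ)) : Matrix (Fin 2) (Fin 2) ℤ) =
      !![0, -1; 1, n] := by
  rw [Matrix.SpecialLinearGroup.coe_mul, ModularGroup.coe_S, ModularGroup.coe_T_zpow]
  simp

namespace IsFrickeForm

variable {k : ℤ} {ε : ℂ} {F : ℍ → ℂ}

lemma isBoundedAtImInfty_slash (hF : IsFrickeForm k ε F) (γ : SL(2, ℤ)) :
    IsBoundedAtImInfty (F ∣[k] γ) := by
  by_cases hγ : γ ∈ CongruenceSubgroup.Gamma0 2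
  · exact (hF.slash_eq γ hγ).symm ▸ hF.isBoundedAtImInfty
  obtain ⟨δ, hδ, n, rfl⟩ := exists_mul_S_mul_T_zpow hγ
  let B : GL (Fin 2) ℝ := fricke⁻¹ * (ModularGroup.S * ModularGroup.T ^ n : SL(2, ℤ))
  have hslash : F ∣[k] (δ * ModularGroup.S * ModularGroup.T ^ n) = (ε • F) ∣[k] B := by
    rw [mul_assoc, SlashAction.slash_mul]
    change (F ∣[k] (δ : GL (Fin 2) ℝ)) ∣[k]
      ((ModularGroup.S * ModularGroup.T ^ n : SL(2, ℤ)) : GL (Fin 2) ℝ) = _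
    rw [hF.slash_eq δ hδ, ← hF.slash_fricke, ← SlashAction.slash_mul, mul_inv_cancel_left]
  rw [hslash]
  refine IsBoundedAtImInfty.slash k ?_ (hF.isBoundedAtImInfty.smul ε)
  have hentry : (ModularGroup.S * ModularGroup.T ^ n : SL(2, ℤ)) 0 0 = 0 :=
    congrFun (congrFun (coe_S_mul_T_zpow n) 0) 0
  simp [B, fricke, GeneralLinearGroup.mkOfDetNeZero, Matrix.inv_def, adjugate_fin_two, mul_apply,
    -Matrix.SpecialLinearGroup.coe_mul, -_root_.map_mul, hentry]

/-- A Fricke form as an element of Mathlib's space of modular forms for `Γ₀(2)`. -/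
def toModularForm (hF : IsFrickeForm k ε F) : ModularForm (CongruenceSubgroup.Gamma0 2) k where
  toFun := F
  slash_action_eq' := by
    rintro _ ⟨γ, hγ, rfl⟩
    exact hF.slash_eq γ hγ
  holo' := hF.mdifferentiable
  bdd_at_cusps' hc := by
    rw [Subgroup.IsArithmetic.isCusp_iff_isCusp_SL2Z] at hc
    rw [OnePoint.isBoundedAt_iff_forall_SL2Z hc]
    exact fun γ _ ↦ hF.isBoundedAtImInfty_slash γ

lemma eq_zero_of_neg_weight (hF : IsFrickeForm k ε F) (hk : k < 0) : F = 0 :=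
  congrArg (⇑) (ModularForm.isZero_of_neg_weight hk hF.toModularForm)

lemma periodic_comp_ofComplex (hF : IsFrickeForm k ε F) :
    Function.Periodic (F ∘ ofComplex) (1 : ℝ) :=
  SlashInvariantFormClass.periodic_comp_ofComplex hF.toModularForm (by simp)

lemma two_vadd (hF : IsFrickeForm k ε F) (τ : ℍ) : F ((2 : ℝ) +ᵥ τ) = F τ :=
  SlashInvariantForm.vAdd_apply_of_mem_strictPeriods hF.toModularForm τ <| by
    simpa using AddSubgroup.mem_zmultiples_iff.2 ⟨2, by norm_num⟩

lemma isBigO_sub_valueAtInfty (hF : IsFrickeForm k ε F) :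
    (fun τ ↦ F τ - valueAtInfty F) =O[atImInfty] fun τ ↦ qexp τ := by
  rw [← Asymptotics.isBigO_norm_right]
  simpa [norm_qexp] using exp_decay_sub_atImInfty one_pos hF.periodic_comp_ofComplex
    hF.mdifferentiable hF.isBoundedAtImInfty

lemma tendsto_valueAtInfty (hF : IsFrickeForm k ε F) :
    Tendsto F atImInfty (𝓝 (valueAtInfty F)) := by
  simpa using (hF.isBigO_sub_valueAtInfty.trans_tendsto tendsto_qexp_atImInfty).add_const
    (valueAtInfty F)

lemma isBigO_qexp (hF : IsFrickeForm k ε F) (h₀ : Tendsto F atImInfty (𝓝 0)) :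
    F =O[atImInfty] fun τ ↦ qexp τ := by
  simpa [IsZeroAtImInfty.valueAtInfty_eq_zero h₀] using hF.isBigO_sub_valueAtInfty

end IsFrickeForm

lemma isFrickeForm_eta4_pow_six : IsFrickeForm 24 1 (eta4 ^ 6) := by
  have heq : eta4 ^ 6 = fun τ ↦
      CuspForm.discriminant τ * CuspForm.discriminant (doubling • τ) := by
    ext τ
    simp only [Pi.pow_apply, eta4, CuspForm.coe_discriminant, ModularForm.discriminant]
    ring
  rw [heq]
  refine .of_apply ?_ (fun γ hγ τ ↦ ?_) (fun τ ↦ ?_) ?_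
  · exact CuspForm.discriminant.holo'.mul
      (mdifferentiable_comp_doubling CuspForm.discriminant.holo')
  · rw [levelOne_apply_smul, levelOne_apply_doubling_smul_smul _ hγ]
    group
  · rw [levelOne_apply_fricke_smul, levelOne_apply_doubling_smul_fricke_smul]
    norm_cast
    rw [show ((√2 : ℝ) * (τ : ℂ)) ^ 24 = (((√2 : ℝ) * (τ : ℂ)) ^ 2) ^ 12 by ring,
      ofReal_sqrt_two_mul_sq]
    ring
  · have hbdd := ModularFormClass.bdd_at_infty CuspForm.discriminant
    exact hbdd.mul (hbdd.comp_tendsto tendsto_doubling_smul_atImInfty)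

lemma isBigO_qexp_eta4_sq : (fun τ : ℍ ↦ qexp τ) =O[atImInfty] (eta4 ^ 2) := by
  have hlim : Tendsto ((fun τ : ℍ ↦ qexp τ) / eta4 ^ 2) atImInfty (𝓝 1) := by
    refine inv_one (G := ℂ) ▸ (tendsto_eta4_sq_div_qexp.inv₀ one_ne_zero).congr fun τ ↦ ?_
    simp
  exact Asymptotics.isBigO_of_div_tendsto_nhds
    (.of_forall fun τ h ↦ absurd h (eta4_pow_ne_zero 2 τ)) 1 hlim

lemma IsFrickeForm.eq_zero_of_tendsto_zero {k : ℤ} {ε : ℂ} {F : ℍ → ℂ} (hF : IsFrickeForm k ε F)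
    (hk : k < 8) (h₀ : Tendsto F atImInfty (𝓝 0)) : F = 0 := by
  have hbdd : IsBoundedAtImInfty (F ^ 3 / eta4 ^ 6) := by
    have hO : (F ^ 3) =O[atImInfty] (eta4 ^ 6) := by
      simpa [← pow_mul] using! ((hF.isBigO_qexp h₀).trans isBigO_qexp_eta4_sq).pow 3
    exact (Asymptotics.div_isBoundedUnder_of_isBigO hO).isBigO_one ℝ
  have hzero : F ^ 3 / eta4 ^ 6 = 0 :=
    ((hF.pow 3).div isFrickeForm_eta4_pow_six (eta4_pow_ne_zero 6) hbdd).eq_zero_of_neg_weight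
      (by push_cast; linarith)
  ext τ
  simpa [eta4_ne_zero] using congrFun hzero τ

end CuspVanishing

section Identities

lemma IsFrickeForm.eq_smul_of_tendsto {k : ℤ} {ε c : ℂ} {F G : ℍ → ℂ}
    (hF : IsFrickeForm k ε F) (hG : IsFrickeForm k ε G) (hk : k < 8)
    (hFlim : Tendsto F atImInfty (𝓝 c)) (hGlim : Tendsto G atImInfty (𝓝 1)) : F = c • G := by
  refine sub_eq_zero.1 <| (hF.sub (hG.const_smul c)).eq_zero_of_tendsto_zero hk ?_
  simpa using! hFlim.sub (hGlim.const_smul c)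

lemma isFrickeForm_M2_sq : IsFrickeForm 4 1 (M2 ^ 2) := by
  simpa using! isFrickeForm_M2.pow 2

lemma isFrickeForm_M2_cube : IsFrickeForm 6 (-1) (M2 ^ 3) := by
  convert isFrickeForm_M2.pow 3 using 1 <;> norm_num

lemma tendsto_M2_atImInfty : Tendsto M2 atImInfty (𝓝 1) :=
  tendsto_of_tendsto_sub_div_qexp tendsto_M2_sub_one_div_qexp

lemma tendsto_M2star_atImInfty : Tendsto M2star atImInfty (𝓝 1) :=
  tendsto_of_tendsto_sub_div_qexp tendsto_M2star_sub_one_div_qexp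

/-- The form `N₄ = M₂ M₂* - 4 D M₂` of weight `4` and sign `-1`, a multiple of the Serre
derivative of `M₂`. -/
def N4 : ℍ → ℂ := (-4 : ℂ) • frickeSerre 2 M2

lemma N4_eq : N4 = M2 * M2star - (4 : ℂ) • D M2 := by
  ext τ
  simp only [N4, frickeSerre, Pi.smul_apply, Pi.sub_apply, Pi.mul_apply, smul_eq_mul]
  push_cast
  ring

lemma isFrickeForm_N4 : IsFrickeForm 4 (-1) N4 := isFrickeForm_M2.frickeSerre.const_smul _

lemma tendsto_N4_atImInfty : Tendsto N4 atImInfty (𝓝 1) := by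
  have hD : Tendsto (D M2) atImInfty (𝓝 0) :=
    isZeroAtImInfty_normalizedDeriv isFrickeForm_M2.mdifferentiable tendsto_M2_atImInfty
  rw [N4_eq]
  simpa using! (tendsto_M2_atImInfty.mul tendsto_M2star_atImInfty).sub (hD.const_smul (4 : ℂ))

lemma hasQDeriv_M2 : HasQDeriv M2 ((4 : ℂ)⁻¹ • (M2 * M2star - N4)) :=
  (hasQDeriv_normalizedDeriv isFrickeForm_M2.mdifferentiable).congr_deriv fun τ ↦ by
    simp [N4_eq]

lemma hasQDeriv_M2star : HasQDeriv M2star ((8 : ℂ)⁻¹ • (M2star ^ 2 - M2 ^ 2)) := by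
  have hD : Tendsto (D M2star) atImInfty (𝓝 0) :=
    isZeroAtImInfty_normalizedDeriv mdifferentiable_M2star tendsto_M2star_atImInfty
  have hdiff : D M2star - (8 : ℂ)⁻¹ • M2star ^ 2 = (-8⁻¹ : ℂ) • M2 ^ 2 := by
    refine isFrickeForm_normalizedDeriv_M2star_sub_sq.eq_smul_of_tendsto isFrickeForm_M2_sq
      (by norm_num) ?_ (by simpa using! tendsto_M2_atImInfty.pow 2)
    simpa using! hD.sub ((tendsto_M2star_atImInfty.pow 2).const_smul (8 : ℂ)⁻¹)
  refine (hasQDeriv_normalizedDeriv mdifferentiable_M2star).congr_deriv fun τ ↦ ?_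
  have := congrFun hdiff τ
  simp only [Pi.sub_apply, Pi.smul_apply, Pi.pow_apply, smul_eq_mul] at this ⊢
  linear_combination this

lemma hasQDeriv_N4 : HasQDeriv N4 ((2 : ℂ)⁻¹ • (N4 * M2star - M2 ^ 3)) := by
  have hD : Tendsto (D N4) atImInfty (𝓝 0) :=
    isZeroAtImInfty_normalizedDeriv isFrickeForm_N4.mdifferentiable tendsto_N4_atImInfty
  have hserre : frickeSerre 4 N4 = (-2⁻¹ : ℂ) • M2 ^ 3 := by
    refine isFrickeForm_N4.frickeSerre.eq_smul_of_tendsto isFrickeForm_M2_cube (by norm_num) ?_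
      (by simpa using! tendsto_M2_atImInfty.pow 3)
    have hlim := hD.sub ((tendsto_M2star_atImInfty.mul tendsto_N4_atImInfty).const_smul
      (((4 : ℤ) : ℂ) / 8))
    rw [show (0 : ℂ) - (((4 : ℤ) : ℂ) / 8) • (1 * 1) = -2⁻¹ by norm_num] at hlim
    exact hlim
  refine (hasQDeriv_normalizedDeriv isFrickeForm_N4.mdifferentiable).congr_deriv fun τ ↦ ?_
  have := congrFun hserre τ
  simp only [frickeSerre, Pi.sub_apply, Pi.smul_apply, Pi.mul_apply, Pi.pow_apply,
    smul_eq_mul] at this ⊢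
  push_cast at this
  linear_combination this

lemma tendsto_normalizedDeriv_div {F H φ : ℍ → ℂ} {a c : ℂ} (hF : MDiff F)
    (hH : HasQDeriv H (φ * H)) (hH₀ : ∀ τ, H τ ≠ 0) (hφ : Tendsto φ atImInfty (𝓝 c))
    (hlim : Tendsto (F / H) atImInfty (𝓝 a)) : Tendsto (D F / H) atImInfty (𝓝 (c * a)) := by
  have hquot := (hasQDeriv_normalizedDeriv hF).div hH hH₀
  have hzero : Tendsto (D (F / H)) atImInfty (𝓝 0) :=
    isZeroAtImInfty_normalizedDeriv hquot.mdifferentiable hlim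
  rw [← zero_add (c * a)]
  refine (hzero.add (hφ.mul hlim)).congr fun τ ↦ ?_
  rw [hquot.eq]
  simp only [Pi.div_apply, Pi.sub_apply, Pi.mul_apply, Pi.pow_apply]
  field_simp [hH₀ τ]
  ring

lemma hasQDeriv_qexp : HasQDeriv (fun τ ↦ qexp τ) (fun τ ↦ qexp τ) := fun τ ↦ by
  have hcoe := (hasQDeriv_coe τ).const_mul (2 * Real.pi * I)
  refine hcoe.cexp.congr_deriv ?_
  simp only [Function.comp_apply, ofComplex_apply, qexp]
  field_simp

lemma tendsto_N4_sub_one_div_qexp :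
    Tendsto (fun τ : ℍ ↦ (N4 τ - 1) / qexp τ) atImInfty (𝓝 (-80)) := by
  have hsub : HasQDeriv (M2 - fun _ ↦ 1) (D M2) :=
    ((hasQDeriv_normalizedDeriv isFrickeForm_M2.mdifferentiable).sub
      (hasQDeriv_const 1)).congr_deriv fun τ ↦ sub_zero _
  have hD : Tendsto (fun τ ↦ D M2 τ / qexp τ) atImInfty (𝓝 24) := by
    have := tendsto_normalizedDeriv_div (φ := fun _ ↦ 1) (c := 1) hsub.mdifferentiable
      (hasQDeriv_qexp.congr_deriv fun τ ↦ (one_mul _).symm) (fun τ ↦ qexp_ne_zero τ)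
      tendsto_const_nhds tendsto_M2_sub_one_div_qexp
    rwa [hsub.eq, one_mul] at this
  have hsum := ((tendsto_M2_sub_one_div_qexp.mul tendsto_M2star_atImInfty).add
    tendsto_M2star_sub_one_div_qexp).sub (hD.const_mul 4)
  norm_num at hsum
  refine hsum.congr fun τ ↦ ?_
  simp only [N4_eq, Pi.sub_apply, Pi.mul_apply, Pi.smul_apply, smul_eq_mul]
  ring

lemma tendsto_M2_pow_four_sub_N4_sq_div_qexp :
    Tendsto (fun τ : ℍ ↦ (M2 τ ^ 4 - N4 τ ^ 2) / qexp τ) atImInfty (𝓝 256) := by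
  have hM2 := tendsto_M2_sub_one_div_qexp.mul
    ((tendsto_M2_atImInfty.add_const 1).mul ((tendsto_M2_atImInfty.pow 2).add_const 1))
  have hN4 := tendsto_N4_sub_one_div_qexp.mul (tendsto_N4_atImInfty.add_const 1)
  have hdiff := hM2.sub hN4
  norm_num at hdiff
  refine hdiff.congr fun τ ↦ ?_
  ring

lemma hasQDeriv_M2_pow_four_sub_N4_sq :
    HasQDeriv (M2 ^ 4 - N4 ^ 2) (M2star * (M2 ^ 4 - N4 ^ 2)) :=
  ((hasQDeriv_M2.pow 4).sub (hasQDeriv_N4.pow 2)).congr_deriv fun τ ↦ by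
    simp only [Pi.sub_apply, Pi.smul_apply, Pi.mul_apply, Pi.pow_apply, Pi.ofNat_apply,
      smul_eq_mul, Nat.cast_ofNat, Nat.add_one_sub_one]
    ring

lemma hasQDeriv_eta4_pow (n : ℕ) :
    HasQDeriv (eta4 ^ n) (((n : ℂ) / 2) • M2star * eta4 ^ n) :=
  (hasQDeriv_eta4.pow n).congr_deriv fun τ ↦ by
    cases n with
    | zero => simp
    | succ n =>
      simp only [Pi.smul_apply, Pi.mul_apply, Pi.pow_apply, Pi.natCast_apply, smul_eq_mul,
        add_tsub_cancel_right]
      ring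

lemma M2_pow_four_eq : M2 ^ 4 = N4 ^ 2 + (256 : ℂ) • eta4 ^ 2 := by
  have hconst : HasQDeriv ((M2 ^ 4 - N4 ^ 2) / eta4 ^ 2) 0 :=
    (hasQDeriv_M2_pow_four_sub_N4_sq.div (hasQDeriv_eta4_pow 2)
      (eta4_pow_ne_zero 2)).congr_deriv fun τ ↦ by
        simp only [Pi.div_apply, Pi.sub_apply, Pi.smul_apply, Pi.mul_apply, Pi.pow_apply,
          Pi.zero_apply, smul_eq_mul, Nat.cast_ofNat]
        ring
  have hlim : Tendsto ((M2 ^ 4 - N4 ^ 2) / eta4 ^ 2) atImInfty (𝓝 256) := by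
    have := tendsto_M2_pow_four_sub_N4_sq_div_qexp.div tendsto_eta4_sq_div_qexp one_ne_zero
    rw [div_one] at this
    refine this.congr fun τ ↦ ?_
    simp only [Pi.div_apply, Pi.sub_apply, Pi.pow_apply]
    rw [div_div_div_cancel_right₀ (qexp_ne_zero _)]
  ext τ
  have hτ : ((M2 ^ 4 - N4 ^ 2) / eta4 ^ 2) τ = 256 :=
    tendsto_nhds_unique (tendsto_const_nhds.congr (hconst.eq_of_hasQDeriv_zero τ)) hlim
  simp only [Pi.div_apply, Pi.sub_apply, Pi.pow_apply] at hτ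
  rw [div_eq_iff (pow_ne_zero 2 (eta4_ne_zero τ))] at hτ
  simp only [Pi.add_apply, Pi.smul_apply, Pi.pow_apply, smul_eq_mul]
  linear_combination hτ

lemma isFrickeForm_eta4_sq : IsFrickeForm 8 1 (eta4 ^ 2) := by
  have hM2 : IsFrickeForm 8 1 (M2 ^ 4) := by
    convert isFrickeForm_M2.pow 4 using 1 <;> norm_num
  have hN4 : IsFrickeForm 8 1 (N4 ^ 2) := by
    convert isFrickeForm_N4.pow 2 using 1 <;> norm_num
  have h := (hM2.sub hN4).const_smul (256 : ℂ)⁻¹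
  rw [M2_pow_four_eq, add_sub_cancel_left, inv_smul_smul₀ (by norm_num)] at h
  exact h

lemma tendsto_E₄_atImInfty : Tendsto ModularForm.E₄ atImInfty (𝓝 1) := by
  rw [← EisensteinSeries.E_qExpansion_coeff_zero (k := 4) (by norm_num) (by decide)]
  refine tendsto_of_hasSum_qexp (c := fun m ↦ (qExpansion 1 ModularForm.E₄).coeff m) fun τ ↦ ?_
  rw [qexp_eq_qParam]
  exact hasSum_qExpansion one_pos (SlashInvariantFormClass.periodic_comp_ofComplex ModularForm.E₄
    (by simp)) ModularForm.E₄.holo'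
    (ModularFormClass.bdd_at_infty ModularForm.E₄) τ

lemma isFrickeForm_E₄_doubling_add :
    IsFrickeForm 4 1 fun τ ↦ 4 * ModularForm.E₄ (doubling • τ) + ModularForm.E₄ τ := by
  refine .of_apply ?_ (fun γ hγ τ ↦ ?_) (fun τ ↦ ?_) ?_
  · exact (mdifferentiable_const.mul (mdifferentiable_comp_doubling ModularForm.E₄.holo')).add
      ModularForm.E₄.holo'
  · rw [levelOne_apply_smul, levelOne_apply_doubling_smul_smul _ hγ]
    ring
  · rw [levelOne_apply_fricke_smul, levelOne_apply_doubling_smul_fricke_smul]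
    norm_cast
    rw [show ((√2 : ℝ) * (τ : ℂ)) ^ 4 = (((√2 : ℝ) * (τ : ℂ)) ^ 2) ^ 2 by ring,
      ofReal_sqrt_two_mul_sq]
    ring
  · have hbdd := ModularFormClass.bdd_at_infty ModularForm.E₄
    exact ((hbdd.comp_tendsto tendsto_doubling_smul_atImInfty).const_mul_left 4).add hbdd

lemma M4plus2_eq (τ : ℍ) : M4plus2 τ = M2 τ ^ 2 := by
  have heq := isFrickeForm_E₄_doubling_add.eq_smul_of_tendsto isFrickeForm_M2_sq (by norm_num)
    (((tendsto_E₄_atImInfty.comp tendsto_doubling_smul_atImInfty).const_mul 4).add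
      tendsto_E₄_atImInfty) (by simpa using! tendsto_M2_atImInfty.pow 2)
  rw [M4plus2, ← coe_doubling_smul, E4_coe, E4_coe, congrFun heq τ, Pi.smul_apply, Pi.pow_apply,
    smul_eq_mul]
  ring

end Identities

section Structure

open Polynomial

lemma IsFrickeForm.eq_zero_of_weight_two {F : ℍ → ℂ} (hF : IsFrickeForm 2 1 F) : F = 0 := by
  have hlim := hF.tendsto_valueAtInfty
  set α := valueAtInfty F
  have hmul : F * M2 = α • N4 :=
    (show IsFrickeForm 4 (-1) (F * M2) by simpa using hF.mul isFrickeForm_M2).eq_smul_of_tendsto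
      isFrickeForm_N4 (by norm_num) (by simpa using! hlim.mul tendsto_M2_atImInfty)
      tendsto_N4_atImInfty
  have hsq : F ^ 2 = α ^ 2 • M2 ^ 2 :=
    (show IsFrickeForm 4 1 (F ^ 2) by simpa using! hF.pow 2).eq_smul_of_tendsto
      isFrickeForm_M2_sq (by norm_num) (hlim.pow 2) (by simpa using! tendsto_M2_atImInfty.pow 2)
  have hα (τ : ℍ) : α ^ 2 * (256 * eta4 τ ^ 2) = 0 := by
    have hmulτ := congrFun hmul τ
    have hsqτ := congrFun hsq τ
    have hM2τ := congrFun M2_pow_four_eq τ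
    simp only [Pi.mul_apply, Pi.smul_apply, Pi.add_apply, Pi.pow_apply, smul_eq_mul]
      at hmulτ hsqτ hM2τ
    linear_combination (F τ * M2 τ + α * N4 τ) * hmulτ - M2 τ ^ 2 * hsqτ - α ^ 2 * hM2τ
  have hα₀ : α = 0 := by simpa [eta4_ne_zero] using hα UpperHalfPlane.I
  exact hF.eq_zero_of_tendsto_zero (by norm_num) (hα₀ ▸ hlim)

lemma IsFrickeForm.exists_eq_smul_add_eta4_sq_mul {k : ℤ} {ε : ℂ} {F G : ℍ → ℂ}
    (hF : IsFrickeForm k ε F) (hG : IsFrickeForm k ε G) (hGlim : Tendsto G atImInfty (𝓝 1)) :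
    ∃ (α : ℂ) (F' : ℍ → ℂ), IsFrickeForm (k - 8) ε F' ∧ F = α • G + eta4 ^ 2 * F' := by
  have hlim := hF.tendsto_valueAtInfty
  set α := valueAtInfty F
  have hdiff := hF.sub (hG.const_smul α)
  have hzero : Tendsto (F - α • G) atImInfty (𝓝 0) := by
    simpa using! hlim.sub (hGlim.const_smul α)
  have hbdd : IsBoundedAtImInfty ((F - α • G) / eta4 ^ 2) :=
    (Asymptotics.div_isBoundedUnder_of_isBigO
      ((hdiff.isBigO_qexp hzero).trans isBigO_qexp_eta4_sq)).isBigO_one ℝ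
  refine ⟨α, (F - α • G) / eta4 ^ 2,
    by simpa using hdiff.div isFrickeForm_eta4_sq (eta4_pow_ne_zero 2) hbdd, ?_⟩
  ext τ
  rw [Pi.add_apply, Pi.mul_apply, Pi.div_apply, mul_div_cancel₀ _ (eta4_pow_ne_zero 2 τ)]
  simp

/-- The function `N₄ / (η(τ)η(2τ))⁴`, invariant up to sign under the Fricke group, with a pole at
`∞`: quotients of Fricke forms are polynomials in it. -/
def haupt : ℍ → ℂ := N4 / eta4

/-- The polynomial `p` evaluated at the function `haupt`. -/
def evalHaupt (p : ℂ[X]) (τ : ℍ) : ℂ := p.eval (haupt τ)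

lemma evalHaupt_add (p r : ℂ[X]) : evalHaupt (p + r) = evalHaupt p + evalHaupt r :=
  funext fun _ ↦ eval_add

lemma N4_eq_eta4_mul_haupt : N4 = eta4 * haupt :=
  funext fun τ ↦ (mul_div_cancel₀ _ (eta4_ne_zero τ)).symm

lemma IsFrickeForm.exists_eq_mul_evalHaupt {w : ℤ} {ε : ℂ} {U : ℍ → ℂ} (hU : IsFrickeForm w ε U)
    (hUlim : Tendsto U atImInfty (𝓝 1)) (h₄ : ∀ F, IsFrickeForm (w - 4) (-ε) F → F = 0)
    (h₈ : ∀ F, IsFrickeForm (w - 8) ε F → F = 0) (j : ℕ) {F : ℍ → ℂ}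
    (hF : IsFrickeForm (w + 4 * j) (ε * (-1) ^ j) F) :
    ∃ p : ℂ[X], p.degree ≤ j ∧ F = U * eta4 ^ j * evalHaupt p := by
  have hUN4 (j : ℕ) : IsFrickeForm (w + 4 * j) (ε * (-1) ^ j) (U * N4 ^ j) := by
    simpa [mul_comm] using hU.mul (isFrickeForm_N4.pow j)
  have hUN4lim (j : ℕ) : Tendsto (U * N4 ^ j) atImInfty (𝓝 1) := by
    simpa using! hUlim.mul (tendsto_N4_atImInfty.pow j)
  have hdeg (α : ℂ) (j : ℕ) : (C α * X ^ j).degree ≤ (j : WithBot ℕ) :=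
    degree_C_mul_X_pow_le j α
  have heval (α : ℂ) (j : ℕ) :
      α • (U * N4 ^ j) = U * eta4 ^ j * evalHaupt (C α * X ^ j) := by
    ext τ
    simp only [N4_eq_eta4_mul_haupt, mul_pow, evalHaupt, Pi.smul_apply, Pi.mul_apply, Pi.pow_apply,
      smul_eq_mul, eval_mul, eval_C, eval_pow, eval_X]
    ring
  induction j using Nat.twoStepInduction generalizing F with
  | zero =>
    obtain ⟨α, F', hF', rfl⟩ := hF.exists_eq_smul_add_eta4_sq_mul (hUN4 0) (hUN4lim 0)
    obtain rfl := h₈ F' (by simpa using hF')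
    exact ⟨C α * X ^ 0, hdeg α 0, by rw [mul_zero, add_zero, heval]⟩
  | one =>
    obtain ⟨α, F', hF', rfl⟩ := hF.exists_eq_smul_add_eta4_sq_mul (hUN4 1) (hUN4lim 1)
    obtain rfl := h₄ F' (by
      convert hF' using 1
      · push_cast
        ring
      · ring)
    exact ⟨C α * X ^ 1, hdeg α 1, by rw [mul_zero, add_zero, heval]⟩
  | more j ih _ =>
    obtain ⟨α, F', hF', rfl⟩ := hF.exists_eq_smul_add_eta4_sq_mul (hUN4 (j + 2)) (hUN4lim (j + 2))
    obtain ⟨p, hp, hpF'⟩ := ih (F := F') (by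
      convert hF' using 1
      · push_cast
        ring
      · ring)
    refine ⟨C α * X ^ (j + 2) + p, (degree_add_le _ _).trans (max_le (hdeg α _)
      (hp.trans (by exact_mod_cast j.le_add_right 2))), ?_⟩
    rw [heval, hpF', evalHaupt_add]
    ring

/-- The function `M₂³ / (η(τ)η(2τ))⁴`, equal to `-2 D haupt`. -/
def hauptDeriv : ℍ → ℂ := M2 ^ 3 / eta4

lemma hauptDeriv_mul_eta4 : hauptDeriv * eta4 = M2 ^ 3 :=
  funext fun τ ↦ div_mul_cancel₀ _ (eta4_ne_zero τ)

lemma IsFrickeForm.exists_eq_evalHaupt {k : ℕ} {F : ℍ → ℂ}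
    (hF : IsFrickeForm (4 * k) ((-1) ^ k) F) :
    ∃ p : ℂ[X], p.degree ≤ k ∧ F = eta4 ^ k * evalHaupt p := by
  obtain ⟨p, hp, hpF⟩ := (IsFrickeForm.const 1).exists_eq_mul_evalHaupt tendsto_const_nhds
    (fun F hF ↦ hF.eq_zero_of_neg_weight (by norm_num))
    (fun F hF ↦ hF.eq_zero_of_neg_weight (by norm_num)) k (F := F) (by simpa using hF)
  exact ⟨p, hp, by rw [hpF]; exact congrArg (· * evalHaupt p) (one_mul _)⟩

lemma IsFrickeForm.exists_eq_hauptDeriv_mul_evalHaupt {k : ℕ} {F : ℍ → ℂ}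
    (hF : IsFrickeForm (4 * k + 2) ((-1) ^ k) F) :
    ∃ b : ℂ[X], b.degree < k ∧ F = eta4 ^ k * (hauptDeriv * evalHaupt b) := by
  obtain _ | k := k
  · obtain rfl := eq_zero_of_weight_two (by simpa using hF)
    exact ⟨0, by simp, by ext; simp [evalHaupt]⟩
  obtain ⟨b, hb, hbF⟩ := isFrickeForm_M2_cube.exists_eq_mul_evalHaupt
    (by simpa using! tendsto_M2_atImInfty.pow 3)
    (fun F hF ↦ eq_zero_of_weight_two (by simpa using hF))
    (fun F hF ↦ hF.eq_zero_of_neg_weight (by norm_num)) k (F := F) (by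
      convert hF using 1
      · push_cast
        ring
      · ring)
  refine ⟨b, hb.trans_lt (by norm_cast; lia), ?_⟩
  rw [hbF, ← hauptDeriv_mul_eta4]
  ring

end Structure

section Quasimodular

open Polynomial

lemma eta4_sq_mul_haupt_sq_add : eta4 ^ 2 * (haupt ^ 2 + 256) = M2 ^ 4 := by
  rw [M2_pow_four_eq, N4_eq_eta4_mul_haupt]
  ext τ
  simp only [Pi.add_apply, Pi.smul_apply, Pi.mul_apply, Pi.pow_apply, Pi.ofNat_apply, smul_eq_mul]
  ring

lemma hauptDeriv_sq : hauptDeriv ^ 2 = M2 ^ 2 * (haupt ^ 2 + 256) := by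
  ext τ
  have hderiv := congrFun hauptDeriv_mul_eta4 τ
  have hhaupt := congrFun eta4_sq_mul_haupt_sq_add τ
  simp only [Pi.mul_apply, Pi.add_apply, Pi.pow_apply, Pi.ofNat_apply] at hderiv hhaupt ⊢
  refine mul_right_cancel₀ (pow_ne_zero 2 (eta4_ne_zero τ)) ?_
  linear_combination (hauptDeriv τ * eta4 τ + M2 τ ^ 3) * hderiv - M2 τ ^ 2 * hhaupt

lemma hasQDeriv_haupt : HasQDeriv haupt ((-2⁻¹ : ℂ) • hauptDeriv) :=
  (hasQDeriv_N4.div hasQDeriv_eta4 eta4_ne_zero).congr_deriv fun τ ↦ by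
    have := eta4_ne_zero τ
    simp only [hauptDeriv, Pi.div_apply, Pi.sub_apply, Pi.smul_apply, Pi.mul_apply, Pi.pow_apply,
      smul_eq_mul]
    field_simp
    ring

lemma hasQDeriv_hauptDeriv : HasQDeriv hauptDeriv
    ((4⁻¹ : ℂ) • (M2star * hauptDeriv) - (3 / 4 : ℂ) • (M2 ^ 2 * haupt)) :=
  ((hasQDeriv_M2.pow 3).div hasQDeriv_eta4 eta4_ne_zero).congr_deriv fun τ ↦ by
    have := eta4_ne_zero τ
    simp only [hauptDeriv, haupt, Pi.div_apply, Pi.sub_apply, Pi.smul_apply, Pi.mul_apply,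
      Pi.pow_apply, smul_eq_mul, Pi.natCast_apply]
    field_simp
    push_cast
    ring

lemma hasQDeriv_evalHaupt (p : ℂ[X]) :
    HasQDeriv (evalHaupt p) ((-2⁻¹ : ℂ) • (hauptDeriv * evalHaupt (derivative p))) :=
  (hasQDeriv_haupt.polynomial_eval p).congr_deriv fun τ ↦ by
    simp only [evalHaupt, Pi.smul_apply, Pi.mul_apply, smul_eq_mul]
    ring

/-- The weight `2` quasimodular function `M₂* p(haupt) + hauptDeriv b(haupt)`. Every quasimodular
form `f₀ + M₂* f₁` of weight `4k + 2` is `(η(τ)η(2τ))^{4k}` times such a function. -/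
def quasi (p b : ℂ[X]) : ℍ → ℂ := M2star * evalHaupt p + hauptDeriv * evalHaupt b

/-- The normalised derivative of `quasi p b`. -/
def quasiDeriv (p b : ℂ[X]) : ℍ → ℂ :=
  (8⁻¹ : ℂ) • ((M2star ^ 2 - M2 ^ 2) * evalHaupt p) -
    (2⁻¹ : ℂ) • (M2star * hauptDeriv * evalHaupt (derivative p)) +
    (4⁻¹ : ℂ) • (M2star * hauptDeriv * evalHaupt b) -
    M2 ^ 2 * evalHaupt (C (3 / 4) * X * b + C (1 / 2) * (X ^ 2 + 256) * derivative b)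

lemma hasQDeriv_quasi (p b : ℂ[X]) : HasQDeriv (quasi p b) (quasiDeriv p b) :=
  ((hasQDeriv_M2star.mul (hasQDeriv_evalHaupt p)).add
    (hasQDeriv_hauptDeriv.mul (hasQDeriv_evalHaupt b))).congr_deriv fun τ ↦ by
    have hsq := congrFun hauptDeriv_sq τ
    simp only [quasiDeriv, evalHaupt, Pi.add_apply, Pi.sub_apply, Pi.smul_apply, Pi.mul_apply,
      Pi.pow_apply, smul_eq_mul, eval_add, eval_mul, eval_pow, eval_C, eval_X, eval_ofNat,
      Pi.ofNat_apply] at hsq ⊢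
    linear_combination (-2⁻¹ * (derivative b).eval (haupt τ)) * hsq

lemma hasQDeriv_sq_sub_sq_mul_evalHaupt (p : ℂ[X]) :
    HasQDeriv ((M2star ^ 2 - M2 ^ 2) * evalHaupt p)
      (((4⁻¹ : ℂ) • (M2star * (M2star ^ 2 - M2 ^ 2)) - (2⁻¹ : ℂ) • (M2 * (M2 * M2star - N4))) *
        evalHaupt p -
        (2⁻¹ : ℂ) • ((M2star ^ 2 - M2 ^ 2) * hauptDeriv * evalHaupt (derivative p))) :=
  (((hasQDeriv_M2star.pow 2).sub (hasQDeriv_M2.pow 2)).mul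
    (hasQDeriv_evalHaupt p)).congr_deriv fun τ ↦ by
    simp only [Pi.add_apply, Pi.sub_apply, Pi.smul_apply, Pi.mul_apply, Pi.pow_apply,
      Pi.ofNat_apply, smul_eq_mul, Nat.cast_ofNat, Nat.add_one_sub_one]
    ring

lemma hasQDeriv_M2star_mul_hauptDeriv_mul_evalHaupt (p : ℂ[X]) :
    HasQDeriv (M2star * hauptDeriv * evalHaupt p)
      (((8⁻¹ : ℂ) • ((M2star ^ 2 - M2 ^ 2) * hauptDeriv) + M2star *
        ((4⁻¹ : ℂ) • (M2star * hauptDeriv) - (3 / 4 : ℂ) • (M2 ^ 2 * haupt))) * evalHaupt p -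
        (2⁻¹ : ℂ) • (M2star * hauptDeriv ^ 2 * evalHaupt (derivative p))) :=
  ((hasQDeriv_M2star.mul hasQDeriv_hauptDeriv).mul (hasQDeriv_evalHaupt p)).congr_deriv fun τ ↦ by
    simp only [Pi.add_apply, Pi.sub_apply, Pi.smul_apply, Pi.mul_apply, Pi.pow_apply, smul_eq_mul]
    ring

lemma hasQDeriv_M2_sq_mul_evalHaupt (p : ℂ[X]) :
    HasQDeriv (M2 ^ 2 * evalHaupt p)
      ((2⁻¹ : ℂ) • (M2 * (M2 * M2star - N4) * evalHaupt p) -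
        (2⁻¹ : ℂ) • (M2 ^ 2 * hauptDeriv * evalHaupt (derivative p))) :=
  ((hasQDeriv_M2.pow 2).mul (hasQDeriv_evalHaupt p)).congr_deriv fun τ ↦ by
    simp only [Pi.add_apply, Pi.sub_apply, Pi.smul_apply, Pi.mul_apply, Pi.pow_apply,
      Pi.ofNat_apply, smul_eq_mul, Nat.cast_ofNat, Nat.add_one_sub_one]
    ring

/-- The operator `G ↦ M₂³ (D² - (k²/4) M₄ + 32 M₈/M₄) (G / M₂)`, with denominators cleared. -/
def odeOperator (k : ℕ) (G : ℍ → ℂ) : ℍ → ℂ :=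
  M2 ^ 2 * D (D G) - 2 * M2 * D M2 * D G - M2 * D (D M2) * G + 2 * D M2 ^ 2 * G -
    ((k ^ 2 / 4 : ℂ) • M2 ^ 4 - 32 * eta4 ^ 2) * G

/-- The first component of `odeOperator k (quasi p b) / M₂⁴`. -/
def odeFst (k : ℕ) (p b : ℂ[X]) : ℂ[X] :=
  C 4⁻¹ * ((X ^ 2 + 256) * derivative (derivative p)) + C 8⁻¹ * (X * derivative p) -
    C (k ^ 2 / 4 : ℂ) * p - C 8⁻¹ * (X * b) - C 8⁻¹ * ((X ^ 2 + 256) * derivative b)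

/-- The second component of `odeOperator k (quasi p b) / M₂⁴`. -/
def odeSnd (k : ℕ) (p b : ℂ[X]) : ℂ[X] :=
  C 4⁻¹ * ((X ^ 2 + 256) * derivative (derivative b)) + C (7 / 8) * (X * derivative b) +
    C (3 / 8 - k ^ 2 / 4 : ℂ) * b + C 8⁻¹ * derivative p

lemma normalizedDeriv_normalizedDeriv_M2 : D (D M2) = (4⁻¹ : ℂ) •
    ((4⁻¹ : ℂ) • ((M2 * M2star - N4) * M2star) + (8⁻¹ : ℂ) • (M2 * (M2star ^ 2 - M2 ^ 2)) -
      (2⁻¹ : ℂ) • (N4 * M2star - M2 ^ 3)) := by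
  rw [hasQDeriv_M2.eq, (((hasQDeriv_M2.mul hasQDeriv_M2star).sub hasQDeriv_N4).const_smul 4⁻¹).eq]
  ext τ
  simp

theorem odeOperator_quasi (k : ℕ) (p b : ℂ[X]) :
    odeOperator k (quasi p b) = M2 ^ 4 * quasi (odeFst k p b) (odeSnd k p b) := by
  have hD := ((((hasQDeriv_sq_sub_sq_mul_evalHaupt p).const_smul 8⁻¹).sub
    ((hasQDeriv_M2star_mul_hauptDeriv_mul_evalHaupt (derivative p)).const_smul 2⁻¹)).add
    ((hasQDeriv_M2star_mul_hauptDeriv_mul_evalHaupt b).const_smul 4⁻¹)).sub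
    (hasQDeriv_M2_sq_mul_evalHaupt (C (3 / 4) * X * b + C (1 / 2) * (X ^ 2 + 256) * derivative b))
  rw [odeOperator, (hasQDeriv_quasi p b).eq, quasiDeriv, hD.eq,
    normalizedDeriv_normalizedDeriv_M2, hasQDeriv_M2.eq]
  ext τ
  have hsq := congrFun hauptDeriv_sq τ
  have hmul := congrFun hauptDeriv_mul_eta4 τ
  have hM2 := congrFun eta4_sq_mul_haupt_sq_add τ
  simp only [N4_eq_eta4_mul_haupt, quasi, odeFst, odeSnd, evalHaupt, Pi.add_apply, Pi.sub_apply,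
    Pi.smul_apply, Pi.mul_apply, Pi.pow_apply, smul_eq_mul, eval_add, eval_sub, eval_mul, eval_pow,
    eval_C, eval_X, eval_ofNat, Pi.ofNat_apply, derivative_add, derivative_mul, derivative_C,
    derivative_X, derivative_pow, derivative_ofNat, eval_zero, eval_one]
    at hsq hmul hM2 ⊢
  set X := M2 τ
  set Z := M2star τ
  set s := haupt τ
  linear_combination
    (X ^ 2 * Z * ((derivative (derivative p)).eval s / 4 - (derivative b).eval s / 8)) * hsq +
    (X * Z * s * (b.eval s / 16 - (derivative p).eval s / 4)) * hmul +
    ((Z * p.eval s + hauptDeriv τ * b.eval s) / 8) * hM2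

end Quasimodular

section Growth

open Polynomial

variable {k : ℕ} {p b : ℂ[X]} {G : ℍ → ℂ} {a : ℂ}

lemma degree_X_mul_derivative_le (p : ℂ[X]) : (X * derivative p).degree ≤ p.degree := by
  refine degree_mono fun i hi ↦ ?_
  obtain _ | i := i
  · simp at hi
  · rw [mem_support_iff, coeff_X_mul, coeff_derivative] at hi
    exact mem_support_iff.2 (left_ne_zero_of_mul hi)

lemma degree_odeFst_le (hp : p.degree ≤ k) (hb : b.degree < k) : (odeFst k p b).degree ≤ k := by
  have euler_mem {r : ℂ[X]} (hr : r ∈ degreeLE ℂ k) : X * derivative r ∈ degreeLE ℂ k :=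
    mem_degreeLE.2 ((degree_X_mul_derivative_le r).trans (mem_degreeLE.1 hr))
  have derivative_mem {r : ℂ[X]} (hr : r ∈ degreeLE ℂ k) : derivative r ∈ degreeLE ℂ k :=
    mem_degreeLE.2 (degree_derivative_le.trans (mem_degreeLE.1 hr))
  have hp_mem : p ∈ degreeLE ℂ k := mem_degreeLE.2 hp
  have hb_mem : b ∈ degreeLE ℂ k := mem_degreeLE.2 hb.le
  have hXb_mem : X * b ∈ degreeLE ℂ k := by
    rw [mem_degreeLE, X_mul, degree_mul_X]
    exact Nat.WithBot.add_one_le_of_lt hb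
  have heuler : odeFst k p b =
      (4⁻¹ : ℂ) • (X * derivative (X * derivative p)) - (8⁻¹ : ℂ) • (X * derivative p) +
      (64 : ℂ) • derivative (derivative p) - (k ^ 2 / 4 : ℂ) • p -
      (8⁻¹ : ℂ) • (X * derivative (X * b)) - (32 : ℂ) • derivative b := by
    refine Polynomial.funext fun x ↦ ?_
    simp only [odeFst, eval_sub, eval_add, eval_mul, eval_C, eval_pow, eval_X, eval_ofNat,
      eval_smul, derivative_mul, derivative_X, one_mul, smul_eq_mul]
    ring
  rw [← mem_degreeLE, heuler]
  exact sub_mem (sub_mem (sub_mem (add_mem (sub_mem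
    (Submodule.smul_mem _ _ (euler_mem (euler_mem hp_mem)))
    (Submodule.smul_mem _ _ (euler_mem hp_mem)))
    (Submodule.smul_mem _ _ (derivative_mem (derivative_mem hp_mem))))
    (Submodule.smul_mem _ _ hp_mem))
    (Submodule.smul_mem _ _ (euler_mem hXb_mem)))
    (Submodule.smul_mem _ _ (derivative_mem hb_mem))

lemma tendsto_eta4_sq_atImInfty : Tendsto (eta4 ^ 2) atImInfty (𝓝 0) := by
  refine (one_mul (0 : ℂ) ▸ tendsto_eta4_sq_div_qexp.mul tendsto_qexp_atImInfty).congr fun τ ↦ ?_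
  exact div_mul_cancel₀ _ (qexp_ne_zero τ)

lemma tendsto_normalizedDeriv_div_eta4_pow (hG : MDiff G)
    (hlim : Tendsto (G / eta4 ^ k) atImInfty (𝓝 a)) :
    Tendsto (D G / eta4 ^ k) atImInfty (𝓝 (k / 2 * a)) :=
  tendsto_normalizedDeriv_div hG (hasQDeriv_eta4_pow k) (eta4_pow_ne_zero k)
    (by simpa using! tendsto_M2star_atImInfty.const_smul (k / 2 : ℂ)) hlim

-- `k / 2` is an indicial root of the operator at `∞`, so the leading term is annihilated.
lemma tendsto_odeOperator_div_eta4_pow (hG : MDiff G)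
    (hlim : Tendsto (G / eta4 ^ k) atImInfty (𝓝 a)) :
    Tendsto (odeOperator k G / eta4 ^ k) atImInfty (𝓝 0) := by
  have hM2 := isFrickeForm_M2.mdifferentiable
  have hDM2 : Tendsto (D M2) atImInfty (𝓝 0) :=
    isZeroAtImInfty_normalizedDeriv hM2 tendsto_M2_atImInfty
  have hDDM2 : Tendsto (D (D M2)) atImInfty (𝓝 0) :=
    isZeroAtImInfty_normalizedDeriv (normalizedDerivOfComplex_mdifferentiable hM2) hDM2
  have hDG := tendsto_normalizedDeriv_div_eta4_pow hG hlim
  have hDDG := tendsto_normalizedDeriv_div_eta4_pow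
    (normalizedDerivOfComplex_mdifferentiable hG) hDG
  have hpot := ((tendsto_M2_atImInfty.pow 4).const_mul (k ^ 2 / 4 : ℂ)).sub
    (tendsto_eta4_sq_atImInfty.const_mul 32)
  have hsum := (((((tendsto_M2_atImInfty.pow 2).mul hDDG).sub
    (((tendsto_M2_atImInfty.mul hDM2).const_mul 2).mul hDG)).sub
    ((tendsto_M2_atImInfty.mul hDDM2).mul hlim)).add
    (((hDM2.pow 2).const_mul 2).mul hlim)).sub (hpot.mul hlim)
  have hroot : (1 : ℂ) ^ 2 * (k / 2 * (k / 2 * a)) - 2 * (1 * 0) * (k / 2 * a) - 1 * 0 * a +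
      2 * 0 ^ 2 * a - (k ^ 2 / 4 * 1 ^ 4 - 32 * 0) * a = 0 := by ring
  refine (hroot ▸ hsum).congr fun τ ↦ ?_
  simp only [odeOperator, Pi.add_apply, Pi.sub_apply, Pi.mul_apply, Pi.div_apply, Pi.pow_apply,
    Pi.smul_apply, Pi.ofNat_apply, smul_eq_mul]
  ring

end Growth

section Vanishing

open Polynomial Bornology

variable {k : ℕ} {p b : ℂ[X]} {F G F' G' : ℍ → ℂ}

lemma tendsto_haupt_cobounded : Tendsto haupt atImInfty (cobounded ℂ) := by
  have heta : Tendsto eta4 atImInfty (𝓝 0) := by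
    rw [tendsto_zero_iff_norm_tendsto_zero]
    have hsqrt := tendsto_eta4_sq_atImInfty.norm.sqrt
    simpa only [Pi.pow_apply, norm_pow, Real.sqrt_sq (norm_nonneg _), norm_zero, Real.sqrt_zero]
      using hsqrt
  have hN4 : ∀ᶠ τ in atImInfty, N4 τ ≠ 0 := tendsto_N4_atImInfty.eventually_ne one_ne_zero
  have hinv : Tendsto (eta4 / N4) atImInfty (𝓝[≠] 0) :=
    tendsto_nhdsWithin_iff.2 ⟨by simpa using! heta.div tendsto_N4_atImInfty one_ne_zero,
      hN4.mono fun τ hτ ↦ div_ne_zero (eta4_ne_zero τ) hτ⟩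
  simpa [Function.comp_def] using! tendsto_inv₀_nhdsNE_zero.comp hinv

lemma isBoundedAtImInfty_eta4_pow_mul_evalHaupt (hp : p.degree ≤ k) :
    IsBoundedAtImInfty (eta4 ^ k * evalHaupt p) := by
  have hbigO : evalHaupt p =O[atImInfty] (haupt ^ k) := by
    have := (isBigO_cobounded_of_degree_le (P := p) (Q := X ^ k) (by simpa using hp)).comp_tendsto
      tendsto_haupt_cobounded
    simpa [Function.comp_def] using! this
  have hN4 : (eta4 ^ k * haupt ^ k) =O[atImInfty] (1 : ℍ → ℝ) := by
    rw [← mul_pow, ← N4_eq_eta4_mul_haupt]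
    exact (tendsto_N4_atImInfty.pow k).isBigO_one ℝ
  exact ((Asymptotics.isBigO_refl _ _).mul hbigO).trans hN4

lemma eq_zero_of_tendsto_evalHaupt (hlim : Tendsto (evalHaupt p) atImInfty (𝓝 0)) : p = 0 := by
  by_contra hp
  have hbigO : (fun _ ↦ 1 : ℍ → ℂ) =O[atImInfty] evalHaupt p := by
    have := (isBigO_cobounded_of_degree_le (P := (1 : ℂ[X])) (Q := p)
      (by simpa using zero_le_degree_iff.2 hp)).comp_tendsto tendsto_haupt_cobounded
    simpa [Function.comp_def] using! this
  simpa using tendsto_nhds_unique tendsto_const_nhds (hbigO.trans_tendsto hlim)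

/-- The polynomial `v` with `G²/8 + G D(P) - P D(G) = M₂² v(haupt)`, where `G = quasi p b` and
`P = p(haupt)`. -/
def wronskianPoly (p b : ℂ[X]) : ℂ[X] :=
  C 8⁻¹ * ((X ^ 2 + 256) * b ^ 2) - C 2⁻¹ * ((X ^ 2 + 256) * derivative p * b) + C 8⁻¹ * p ^ 2 +
    C (3 / 4) * (X * p * b) + C 2⁻¹ * ((X ^ 2 + 256) * p * derivative b)

lemma wronskian_quasi_evalHaupt (p b : ℂ[X]) :
    (8⁻¹ : ℂ) • quasi p b ^ 2 + quasi p b * D (evalHaupt p) - evalHaupt p * D (quasi p b) =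
      M2 ^ 2 * evalHaupt (wronskianPoly p b) := by
  rw [(hasQDeriv_evalHaupt p).eq, (hasQDeriv_quasi p b).eq]
  ext τ
  have hsq := congrFun hauptDeriv_sq τ
  simp only [quasi, quasiDeriv, wronskianPoly, evalHaupt, Pi.add_apply, Pi.sub_apply,
    Pi.smul_apply, Pi.mul_apply, Pi.pow_apply, smul_eq_mul, eval_add, eval_sub, eval_mul, eval_pow,
    eval_C, eval_X, eval_ofNat, Pi.ofNat_apply] at hsq ⊢
  linear_combination (b.eval (haupt τ) ^ 2 / 8 -
    (derivative p).eval (haupt τ) * b.eval (haupt τ) / 2) * hsq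

lemma isBoundedAtImInfty_eta4_pow_mul_normalizedDeriv_evalHaupt (hp : p.degree ≤ k) :
    IsBoundedAtImInfty (eta4 ^ k * D (evalHaupt p)) := by
  have hprod := (hasQDeriv_eta4_pow k).mul
    (hasQDeriv_normalizedDeriv (hasQDeriv_evalHaupt p).mdifferentiable)
  have hbdd := isBoundedAtImInfty_eta4_pow_mul_evalHaupt hp
  have hderiv : eta4 ^ k * D (evalHaupt p) = D (eta4 ^ k * evalHaupt p) -
      (k / 2 : ℂ) • M2star * (eta4 ^ k * evalHaupt p) := by
    rw [hprod.eq]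
    ring
  rw [hderiv]
  exact (isBoundedAtImInfty_normalizedDeriv hprod.mdifferentiable hbdd).sub
    ((isBoundedAtImInfty_M2star.smul _).mul hbdd)

lemma tendsto_zero_of_tendsto_mul {U : ℍ → ℂ} (hU : Tendsto U atImInfty (𝓝 1))
    (hUG : Tendsto (U * G) atImInfty (𝓝 0)) : Tendsto G atImInfty (𝓝 0) := by
  refine (zero_div (1 : ℂ) ▸ hUG.div hU one_ne_zero).congr' ?_
  filter_upwards [hU.eventually_ne one_ne_zero] with τ hτ
  exact mul_div_cancel_left₀ _ hτ

lemma wronskianPoly_eq_zero_of_tendsto (hp : p.degree ≤ k)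
    (hlim : Tendsto (quasi p b / eta4 ^ k) atImInfty (𝓝 0)) : wronskianPoly p b = 0 := by
  have hDlim : Tendsto (D (quasi p b) / eta4 ^ k) atImInfty (𝓝 0) := by
    simpa using
      tendsto_normalizedDeriv_div_eta4_pow (hasQDeriv_quasi p b).mdifferentiable hlim
  have mul_tendsto {F A : ℍ → ℂ} (hF : Tendsto (F / eta4 ^ k) atImInfty (𝓝 0))
      (hA : IsBoundedAtImInfty (eta4 ^ k * A)) : Tendsto (F * A) atImInfty (𝓝 0) :=
    (ZeroAtFilter.mul_boundedAtFilter hF hA).congr fun τ ↦ by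
      have := eta4_pow_ne_zero k τ
      simp only [Pi.mul_apply, Pi.div_apply]
      field_simp
  have hquasi : Tendsto (quasi p b) atImInfty (𝓝 0) := by
    have hone : evalHaupt 1 = 1 := funext fun _ ↦ eval_one
    simpa [hone] using mul_tendsto hlim
      (isBoundedAtImInfty_eta4_pow_mul_evalHaupt (p := 1) (by simp))
  have hcross := mul_tendsto hlim (isBoundedAtImInfty_eta4_pow_mul_normalizedDeriv_evalHaupt hp)
  have hcross_deriv := mul_tendsto hDlim (isBoundedAtImInfty_eta4_pow_mul_evalHaupt hp)
  refine eq_zero_of_tendsto_evalHaupt (tendsto_zero_of_tendsto_mul (U := M2 ^ 2)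
    (by simpa using! tendsto_M2_atImInfty.pow 2) ?_)
  rw [← wronskian_quasi_evalHaupt, mul_comm (evalHaupt p)]
  simpa using! (((hquasi.pow 2).const_smul (8⁻¹ : ℂ)).add hcross).sub hcross_deriv

-- A zero `τ₀` of order `n ≥ 1` of `F` would have order `n - 1` on one side and `≥ n` on the other.
lemma HasQDeriv.eq_zero_of_mul_eq_mul (hF : HasQDeriv F F') (hG : HasQDeriv G G')
    (hFG : F' * G = F * G') {τ₀ : ℍ} (hFτ₀ : F τ₀ = 0) (hGτ₀ : G τ₀ ≠ 0) : F = 0 := by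
  have hFan : AnalyticOnNhd ℂ (F ∘ ofComplex) {z | 0 < z.im} :=
    (UpperHalfPlane.mdifferentiable_iff.1 hF.mdifferentiable).analyticOnNhd
      isOpen_upperHalfPlaneSet
  have hGan : AnalyticOnNhd ℂ (G ∘ ofComplex) {z | 0 < z.im} :=
    (UpperHalfPlane.mdifferentiable_iff.1 hG.mdifferentiable).analyticOnNhd
      isOpen_upperHalfPlaneSet
  have hnear : deriv (F ∘ ofComplex) * (G ∘ ofComplex) =ᶠ[𝓝 (τ₀ : ℂ)]
      (F ∘ ofComplex) * deriv (G ∘ ofComplex) := by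
    filter_upwards [isOpen_upperHalfPlaneSet.mem_nhds τ₀.2] with z hz
    have hz' := congrFun hFG ⟨z, hz⟩
    have hFz := (hF ⟨z, hz⟩).deriv
    have hGz := (hG ⟨z, hz⟩).deriv
    simp only [Pi.mul_apply, Function.comp_apply, ofComplex_apply_of_im_pos hz] at hz' hFz hGz ⊢
    rw [hFz, hGz]
    linear_combination 2 * Real.pi * I * hz'
  have horder := analyticOrderAt_congr hnear
  rw [analyticOrderAt_mul (hFan τ₀ τ₀.2).deriv (hGan τ₀ τ₀.2),
    analyticOrderAt_mul (hFan τ₀ τ₀.2) (hGan τ₀ τ₀.2).deriv,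
    (hGan τ₀ τ₀.2).analyticOrderAt_eq_zero.2 (by simpa using hGτ₀), add_zero] at horder
  have hadd := (hFan τ₀ τ₀.2).analyticOrderAt_deriv_add_one
  simp only [Function.comp_apply, ofComplex_apply, hFτ₀, sub_zero] at hadd
  have hle : analyticOrderAt (F ∘ ofComplex) τ₀ + 1 ≤ analyticOrderAt (F ∘ ofComplex) τ₀ :=
    calc _ ≤ analyticOrderAt (deriv (F ∘ ofComplex)) τ₀ + 1 := by rw [horder]; gcongr; simp
      _ = _ := hadd
  have htop : analyticOrderAt (F ∘ ofComplex) τ₀ = ⊤ :=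
    of_not_not fun hne ↦ lt_irrefl _ ((ENat.add_one_le_iff hne).1 hle)
  ext τ
  simpa using hFan.eqOn_zero_of_preconnected_of_eventuallyEq_zero
    (convex_halfSpace_im_gt 0).isPreconnected τ₀.2 (analyticOrderAt_eq_top.1 htop) τ.2

lemma HasQDeriv.eq_smul_of_mul_eq_mul (hF : HasQDeriv F F') (hG : HasQDeriv G G')
    (hFG : F' * G = F * G') {τ₀ : ℍ} (hτ₀ : G τ₀ ≠ 0) : F = (F τ₀ / G τ₀) • G := by
  refine sub_eq_zero.1 ((hF.sub (hG.const_smul _)).eq_zero_of_mul_eq_mul hG ?_ ?_ hτ₀)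
  · rw [sub_mul, sub_mul, hFG, smul_mul_assoc, smul_mul_assoc, mul_comm G]
  · simp [hτ₀]

lemma haupt_two_vadd (τ : ℍ) : haupt ((2 : ℝ) +ᵥ τ) = haupt τ := by
  simp only [haupt, Pi.div_apply, isFrickeForm_N4.two_vadd, eta4_two_vadd]

lemma evalHaupt_two_vadd (p : ℂ[X]) (τ : ℍ) : evalHaupt p ((2 : ℝ) +ᵥ τ) = evalHaupt p τ := by
  rw [evalHaupt, evalHaupt, haupt_two_vadd]

lemma quasi_two_vadd (p b : ℂ[X]) (τ : ℍ) : quasi p b ((2 : ℝ) +ᵥ τ) = quasi p b τ := by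
  simp only [quasi, hauptDeriv, Pi.add_apply, Pi.mul_apply, Pi.div_apply, Pi.pow_apply,
    evalHaupt_two_vadd, eta4_two_vadd, M2star_two_vadd, isFrickeForm_M2.two_vadd]

-- A vanishing Wronskian makes `evalHaupt p / G + (π i / 4) τ` constant, against periodicity.
lemma quasi_eq_zero_of_wronskianPoly_eq_zero (h : wronskianPoly p b = 0) : quasi p b = 0 := by
  by_contra hne
  obtain ⟨τ₀, hτ₀⟩ := Function.ne_iff.1 hne
  have hquasi := hasQDeriv_normalizedDeriv (hasQDeriv_quasi p b).mdifferentiable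
  have hevalHaupt := hasQDeriv_normalizedDeriv (hasQDeriv_evalHaupt p).mdifferentiable
  have hwronskian := wronskian_quasi_evalHaupt p b
  set G := quasi p b
  set P := evalHaupt p
  have hprim := hevalHaupt.add ((hasQDeriv_coe.mul hquasi).const_smul (2 * Real.pi * I / 8))
  have hprop := hprim.eq_smul_of_mul_eq_mul hquasi (funext fun τ ↦ by
    have hτ := congrFun hwronskian τ
    simp only [h, evalHaupt, eval_zero, Pi.add_apply, Pi.sub_apply, Pi.smul_apply, Pi.mul_apply,
      Pi.pow_apply, smul_eq_mul] at hτ ⊢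
    field_simp
    linear_combination 8 * hτ) hτ₀
  have hτ := congrFun hprop τ₀
  have hτ' := congrFun hprop ((2 : ℝ) +ᵥ τ₀)
  simp only [Pi.add_apply, Pi.smul_apply, Pi.mul_apply, smul_eq_mul, P, G, quasi_two_vadd,
    evalHaupt_two_vadd, UpperHalfPlane.coe_vadd] at hτ hτ'
  refine hτ₀ ((mul_eq_zero_iff_left two_pi_I_ne_zero).1 ?_)
  push_cast at hτ'
  linear_combination 4 * (hτ' - hτ)

theorem quasi_eq_zero_of_tendsto (hp : p.degree ≤ k)
    (hlim : Tendsto (quasi p b / eta4 ^ k) atImInfty (𝓝 0)) : quasi p b = 0 :=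
  quasi_eq_zero_of_wronskianPoly_eq_zero (wronskianPoly_eq_zero_of_tendsto hp hlim)

theorem odeOperator_quasi_eq_zero {a : ℂ} (hp : p.degree ≤ k) (hb : b.degree < k)
    (hlim : Tendsto (quasi p b / eta4 ^ k) atImInfty (𝓝 a)) : odeOperator k (quasi p b) = 0 := by
  have hode := tendsto_odeOperator_div_eta4_pow (hasQDeriv_quasi p b).mdifferentiable hlim
  rw [odeOperator_quasi] at hode ⊢
  rw [mul_div_assoc] at hode
  have hM2 : Tendsto (M2 ^ 4) atImInfty (𝓝 1) := by simpa using! tendsto_M2_atImInfty.pow 4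
  rw [quasi_eq_zero_of_tendsto (degree_odeFst_le hp hb) (tendsto_zero_of_tendsto_mul hM2 hode),
    mul_zero]

end Vanishing

section Bridge

variable {k : ℤ} {ε : ℂ} {f : ℂ → ℂ}

lemma coe_smul_eq_moeb (γ : SL2Z) (τ : ℍ) : ((γ • τ : ℍ) : ℂ) = moeb (toR γ) τ := by
  rw [coe_specialLinearGroup_apply]
  simp [moeb, toR]

lemma jfac_toR (γ : SL2Z) (τ : ℍ) : jfac (toR γ) τ = denom γ τ := by
  simp [jfac, toR, denom]

lemma isFrickeForm_of_mem_MFplus2 (hf : f ∈ MFplus2 ε k) : IsFrickeForm k ε fun τ ↦ f τ := by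
  obtain ⟨hform, hfricke⟩ := hf
  refine .of_apply ?_ (fun γ hγ τ ↦ ?_) (fun τ ↦ ?_) ?_
  · refine UpperHalfPlane.mdifferentiable_iff.2 (hform.holo.congr fun z hz ↦ ?_)
    rw [Function.comp_apply, ofComplex_apply_of_im_pos hz]
  · have := hform.transform (toR γ) ⟨γ, hγ, rfl⟩ τ τ.2
    rwa [← coe_smul_eq_moeb, jfac_toR, one_mul] at this
  · have hne : ((√2 : ℝ) * τ : ℂ) ^ k ≠ 0 :=
      zpow_ne_zero _ (mul_ne_zero ofReal_sqrt_two_ne_zero τ.ne_zero)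
    have := hfricke τ τ.2
    rw [_root_.zpow_neg, inv_mul_eq_iff_eq_mul₀ hne] at this
    rw [coe_fricke_smul, this]
    ring
  · obtain ⟨C, hC⟩ := hform.bdd_at_cusps 1
    refine isBoundedAtImInfty_iff.2 ⟨C, 1, fun τ hτ ↦ ?_⟩
    simpa [moeb, jfac] using hC τ τ.2 hτ

lemma exists_tendsto_div_qexp_pow_of_vOrder {k : ℕ} (hf : VOrder 1 f k) :
    ∃ c : ℂ, Tendsto (fun τ : ℍ ↦ f τ / qexp τ ^ k) atImInfty (𝓝 c) := by
  obtain ⟨c, -, hc⟩ := hf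
  refine ⟨c, (atImInfty_basis.tendsto_iff Metric.nhds_basis_ball).2 fun ε hε ↦ ?_⟩
  obtain ⟨Y, hY⟩ := hc ε hε
  refine ⟨Y, trivial, fun τ hτ ↦ mem_ball_iff_norm.2 ?_⟩
  have hexp : cexp (-(2 * Real.pi * I * (k : ℝ) * τ / (1 : ℝ))) = (qexp τ ^ k)⁻¹ := by
    rw [qexp, ← Complex.exp_nat_mul, ← Complex.exp_neg]
    congr 1
    push_cast
    ring
  rw [div_eq_inv_mul, ← hexp]
  exact hY τ hτ

lemma tendsto_div_eta4_pow_of_tendsto_div_qexp_pow {k : ℕ} {G : ℍ → ℂ} {c : ℂ}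
    (hlim : Tendsto (fun τ : ℍ ↦ (eta4 ^ k * G) τ / qexp τ ^ k) atImInfty (𝓝 c)) :
    Tendsto (G / eta4 ^ k) atImInfty (𝓝 c) := by
  have hquot := hlim.div (tendsto_eta4_sq_div_qexp.pow k) (by simp)
  rw [one_pow, div_one] at hquot
  refine hquot.congr fun τ ↦ ?_
  have := eta4_ne_zero τ
  have := qexp_ne_zero τ
  simp only [Pi.div_apply, Pi.mul_apply, Pi.pow_apply, div_pow]
  field_simp
  ring

end Bridge

section SecondDerivative

lemma deriv_deriv_div {g m : ℂ → ℂ} {z : ℂ} (hg : AnalyticAt ℂ g z) (hm : AnalyticAt ℂ m z)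
    (hmz : m z ≠ 0) : deriv (deriv (g / m)) z =
      (m z ^ 2 * deriv (deriv g) z - 2 * m z * deriv m z * deriv g z - m z * deriv (deriv m) z * g z
        + 2 * deriv m z ^ 2 * g z) / m z ^ 3 := by
  have hfirst : deriv (g / m) =ᶠ[𝓝 z] (deriv g * m - g * deriv m) / m ^ 2 := by
    filter_upwards [hg.eventually_analyticAt, hm.eventually_analyticAt,
      hm.continuousAt.eventually_ne hmz] with w hgw hmw hw
    exact deriv_div hgw.differentiableAt hmw.differentiableAt hw
  have hm' := hm.differentiableAt.hasDerivAt
  have hg' := hg.differentiableAt.hasDerivAt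
  have hsecond := (((hg.deriv.differentiableAt.hasDerivAt.mul hm').sub
    (hg'.mul hm.deriv.differentiableAt.hasDerivAt)).div (hm'.pow 2) (pow_ne_zero 2 hmz))
  rw [hfirst.deriv_eq, hsecond.deriv]
  simp only [Pi.sub_apply, Pi.mul_apply, Pi.pow_apply]
  field_simp
  ring

variable {G : ℍ → ℂ} {k : ℕ}

lemma deriv_comp_ofComplex (hG : MDiff G) (τ : ℍ) :
    deriv (G ∘ ofComplex) τ = 2 * Real.pi * I * D G τ :=
  (hasQDeriv_normalizedDeriv hG τ).deriv

lemma deriv_deriv_comp_ofComplex (hG : MDiff G) (τ : ℍ) :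
    deriv (deriv (G ∘ ofComplex)) τ = (2 * Real.pi * I) ^ 2 * D (D G) τ := by
  have hfirst : deriv (G ∘ ofComplex) =ᶠ[𝓝 (τ : ℂ)]
      fun z ↦ 2 * Real.pi * I * (D G ∘ ofComplex) z := by
    filter_upwards [isOpen_upperHalfPlaneSet.mem_nhds τ.2] with z hz
    simpa [ofComplex_apply_of_im_pos hz] using deriv_comp_ofComplex hG ⟨z, hz⟩
  rw [hfirst.deriv_eq, deriv_const_mul_field,
    deriv_comp_ofComplex (normalizedDerivOfComplex_mdifferentiable hG)]
  ring

lemma deriv_deriv_div_M2 (hG : MDiff G) (hode : odeOperator k G = 0) {τ : ℍ} (hτ : M2 τ ≠ 0) :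
    deriv (deriv ((G / M2) ∘ ofComplex)) τ = -(4 * (Real.pi : ℂ) ^ 2) *
      ((k / 2 : ℂ) ^ 2 * M2 τ ^ 2 - 32 * eta4 τ ^ 2 / M2 τ ^ 2) * (G τ / M2 τ) := by
  have analyticAt_comp {F : ℍ → ℂ} (hF : MDiff F) : AnalyticAt ℂ (F ∘ ofComplex) τ :=
    (UpperHalfPlane.mdifferentiable_iff.1 hF).analyticAt (isOpen_upperHalfPlaneSet.mem_nhds τ.2)
  have hM2 := isFrickeForm_M2.mdifferentiable
  have hquot := deriv_deriv_div (analyticAt_comp hG) (analyticAt_comp hM2) (by simpa using hτ)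
  have hodeτ := congrFun hode τ
  simp only [odeOperator, Pi.add_apply, Pi.sub_apply, Pi.mul_apply, Pi.pow_apply, Pi.smul_apply,
    Pi.ofNat_apply, smul_eq_mul] at hodeτ
  rw [show (G / M2) ∘ ofComplex = G ∘ ofComplex / M2 ∘ ofComplex from rfl, hquot]
  simp only [deriv_deriv_comp_ofComplex hG, deriv_deriv_comp_ofComplex hM2,
    deriv_comp_ofComplex hG, deriv_comp_ofComplex hM2, Function.comp_apply, ofComplex_apply]
  field_simp
  rw [I_sq]
  linear_combination -16 * hodeτ

end SecondDerivative

lemma exists_eq_eta4_pow_mul_quasi {k : ℕ} {f₀ f₁ : ℂ → ℂ}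
    (hf₀ : f₀ ∈ MFplus2 ((-1) ^ k) (4 * k + 2)) (hf₁ : f₁ ∈ MFplus2 ((-1) ^ k) (4 * k)) :
    ∃ p b : Polynomial ℂ, p.degree ≤ k ∧ b.degree < k ∧
      ∀ τ : ℍ, f₀ τ + M2star2 τ * f₁ τ = (eta4 ^ k * quasi p b) τ := by
  obtain ⟨b, hb, hbf₀⟩ := (isFrickeForm_of_mem_MFplus2 hf₀).exists_eq_hauptDeriv_mul_evalHaupt
  obtain ⟨p, hp, hpf₁⟩ := (isFrickeForm_of_mem_MFplus2 hf₁).exists_eq_evalHaupt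
  refine ⟨p, b, hp, hb, fun τ ↦ ?_⟩
  have h₀ := congrFun hbf₀ τ
  have h₁ := congrFun hpf₁ τ
  simp only [quasi, M2star, Pi.add_apply, Pi.mul_apply] at h₀ h₁ ⊢
  rw [h₀, h₁]
  ring

end FrickeTwo

/-- Theorem: an extremal quasimodular form of weight `4k+2` and depth 1
on `Γ₀⁺(2)` with sign `(-1)^k`, divided by `M₈^{k/2}·M₂`, solves
`y″ = -4π²((k/2)² M₄ - 32 M₈/M₄) y`. -/
theorem extremal_Gamma0plus2_weight4kplus2_MODE
    (k : ℕ)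
    (f₀ f₁ : ℂ → ℂ)
    (hf₀ : f₀ ∈ MFplus2 ((-1 : ℂ) ^ k) (4 * k + 2))
    (hf₁ : f₁ ∈ MFplus2 ((-1 : ℂ) ^ k) (4 * k))
    (f : ℂ → ℂ) (hf : ∀ z, f z = f₀ z + M2star2 z * f₁ z)
    (hext : VOrder 1 f (k : ℝ)) :
    ∀ z ∈ UHP, M2minus z ≠ 0 →
      deriv (deriv fun w => f w / (Pfun2 k w * M2minus w)) z
        = -(4 * (Real.pi : ℂ) ^ 2) *
            (((k : ℂ) / 2) ^ 2 * M4plus2 z - 32 * M8fun z / M4plus2 z) *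
            (f z / (Pfun2 k z * M2minus z)) := by
  intro z hz hM2
  obtain ⟨p, b, hp, hb, hfG⟩ := FrickeTwo.exists_eq_eta4_pow_mul_quasi hf₀ hf₁
  obtain ⟨c, hlim⟩ := FrickeTwo.exists_tendsto_div_qexp_pow_of_vOrder hext
  simp only [hf, hfG] at hlim
  have hode := FrickeTwo.odeOperator_quasi_eq_zero hp hb
    (FrickeTwo.tendsto_div_eta4_pow_of_tendsto_div_qexp_pow hlim)
  have hquot (τ : ℍ) : f τ / (Pfun2 k τ * M2minus τ) =
      (FrickeTwo.quasi p b / FrickeTwo.M2) τ := by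
    rw [hf, hfG, FrickeTwo.Pfun2_eq]
    exact mul_div_mul_left _ _ (FrickeTwo.eta4_pow_ne_zero k τ)
  have hnear : (fun w ↦ f w / (Pfun2 k w * M2minus w)) =ᶠ[𝓝 z]
      (FrickeTwo.quasi p b / FrickeTwo.M2) ∘ ofComplex := by
    filter_upwards [isOpen_upperHalfPlaneSet.mem_nhds hz] with w hw
    simpa [ofComplex_apply_of_im_pos hw] using hquot ⟨w, hw⟩
  rw [hnear.deriv.deriv_eq]
  have hsecond := FrickeTwo.deriv_deriv_div_M2 (τ := ⟨z, hz⟩)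
    (FrickeTwo.hasQDeriv_quasi p b).mdifferentiable hode hM2
  rw [← FrickeTwo.M4plus2_eq, ← FrickeTwo.M8fun_eq] at hsecond
  rw [hquot ⟨z, hz⟩]
  exact hsecond
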